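/- arXiv:2109.07209 — 3 statements merged into one kernel-verified Lean document; each statement's English description precedes it below -/
import Mathlib

section
/- For all integers n ≥ 0, α ≥ 0, β ≥ 0, γ ≥ 0, the number of (4,8)-regular overpartitions satisfies p̄_{4,8}( 16 · 3^{4α+1} · 5^{4β} · 7^{4γ} · n + 34 · 3^{4α} · 5^{4β} · 7^{4γ} ) ≡ 0 (mod 32). -/
/-- The number of `(j,k)`-regular overpartitions of `n`: pairs `(λ, μ)` where `λ` is a
partition of some `m ≤ n` into distinct parts, `μ` is a partition of `n - m`, and no part
of `λ` or `μ` is congruent to `j` modulo `k`. -/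
def regularOverpartitions (j k n : ℕ) : ℕ :=
  ∑ m ∈ Finset.range (n + 1),
    ((Nat.Partition.distincts m).filter (fun lam => ∀ i ∈ lam.parts, i % k ≠ j)).card *
    ((Finset.univ : Finset (Nat.Partition (n - m))).filter
      (fun mu => ∀ i ∈ mu.parts, i % k ≠ j)).card

namespace OP
open PowerSeries Finset

/-- Gaussian binomial. -/
def qb {R : Type*} [CommRing R] (q : R) : ℕ → ℕ → R
  | _, 0 => 1
  | 0, _ + 1 => 0
  | n + 1, k + 1 => qb q n k + q ^ (k + 1) * qb q n (k + 1)

/-- Finite Euler product. -/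
def E {R : Type*} [CommRing R] (q : R) (n : ℕ) : R := ∏ i ∈ range n, (1 - q ^ (i + 1))

section
variable {R : Type*} [CommRing R] (q : R)

lemma qb_zero (n : ℕ) : qb q n 0 = 1 := by cases n <;> rfl

lemma qb_succ (n k : ℕ) : qb q (n + 1) (k + 1) = qb q n k + q ^ (k + 1) * qb q n (k + 1) := rfl

lemma qb_lt (n k : ℕ) (h : n < k) : qb q n k = 0 := by
  induction n generalizing k with
  | zero => obtain ⟨k, rfl⟩ := Nat.exists_eq_succ_of_ne_zero (by omega : k ≠ 0); rfl
  | succ n ih =>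
    obtain ⟨k, rfl⟩ := Nat.exists_eq_succ_of_ne_zero (by omega : k ≠ 0)
    rw [Nat.succ_eq_add_one, qb_succ, ih k (by omega), ih (k + 1) (by omega)]; simp

lemma qb_self (n : ℕ) : qb q n n = 1 := by
  induction n with
  | zero => rfl
  | succ n ih => rw [qb_succ, ih, qb_lt q n (n+1) (by omega)]; simp

lemma E_succ (n : ℕ) : E q (n + 1) = E q n * (1 - q ^ (n + 1)) := by
  simp [E, prod_range_succ]

lemma qb_fact (a b : ℕ) : qb q (a + b) a * (E q a * E q b) = E q (a + b) := by
  induction h : a + b generalizing a b with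
  | zero =>
    have : a = 0 := by omega
    have : b = 0 := by omega
    subst_vars; simp [qb_zero, E]
  | succ m ih =>
    rcases a with _ | a
    · simp only [zero_add] at h; subst h; simp [qb_zero, E]
    rcases b with _ | b
    · simp only [add_zero] at h; rw [h]; simp [qb_self, E]
    rw [qb_succ, E_succ, E_succ, E_succ]
    have h1 := ih a (b + 1) (by omega)
    have h2 := ih (a + 1) b (by omega)
    rw [E_succ] at h1 h2
    have hm : m = a + b + 1 := by omega
    linear_combination (1 - q ^ (a + 1)) * h1 + q ^ (a+1) * (1 - q^(b+1)) * h2 + E q m * q * congrArg (fun t => q ^ t) hm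

lemma qbinom (y z : R) (m : ℕ) : ∏ i ∈ range m, (y + z * q ^ i) =
    ∑ k ∈ range (m + 1), q ^ (k.choose 2) * qb q m k * z ^ k * y ^ (m - k) := by
  induction m generalizing z with
  | zero => simp [qb_zero]
  | succ m ih =>
    rw [prod_range_succ']
    have : ∀ i, y + z * q ^ (i + 1) = y + (z * q) * q ^ i := fun i => by ring
    simp only [this, ih, pow_zero, mul_one]
    rw [mul_add, sum_range_succ' _ (m + 1), sum_mul, sum_mul]
    simp only [qb_succ, mul_add, add_mul, sum_add_distrib]
    have e1 : ∑ i ∈ range (m+1), q ^ i.choose 2 * qb q m i * (z * q) ^ i * y ^ (m - i) * z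
      = ∑ i ∈ range (m+1), q ^ (i + 1).choose 2 * qb q m i * z ^ (i + 1) * y ^ (m + 1 - (i + 1)) := by
      refine sum_congr rfl fun i hi => ?_
      rw [Nat.choose_succ_succ' i 1, Nat.choose_one_right, Nat.add_sub_add_right]
      ring
    have e2 : ∑ i ∈ range (m+1), q ^ i.choose 2 * qb q m i * (z * q) ^ i * y ^ (m - i) * y
      = ∑ i ∈ range (m+1), q ^ (i + 1).choose 2 * (q ^ (i+1) * qb q m (i+1)) * z ^ (i + 1) * y ^ (m + 1 - (i + 1)) +  q ^ (Nat.choose 0 2) * qb q (m + 1) 0 * z ^ 0 * y ^ (m + 1 - 0) := by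
      rw [sum_range_succ', sum_range_succ _ m, qb_lt q m (m+1) (by omega)]
      simp only [qb_zero]
      have : ∀ i ∈ range m, q ^ (i+1).choose 2 * qb q m (i+1) * (z * q) ^ (i+1) * y ^ (m - (i+1)) * y
         = q ^ (i + 1).choose 2 * (q ^ (i+1) * qb q m (i+1)) * z ^ (i + 1) * y ^ (m + 1 - (i + 1)) := by
        intro i hi
        have := mem_range.1 hi
        rw [show m + 1 - (i+1) = m - (i+1) + 1 by omega]; ring
      rw [sum_congr rfl this]
      simp
      ring
    rw [e1, e2]; ring

lemma qb_map {S : Type*} [CommRing S] (f : R →+* S) (n k : ℕ) : qb (f q) n k = f (qb q n k) := by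
  induction n generalizing k with
  | zero => cases k <;> simp [qb]
  | succ n ih => cases k with
    | zero => simp [qb_zero]
    | succ k => simp [qb_succ, ih]

end

lemma sum_split {M : Type*} [AddCommMonoid M] (F : ℕ → M) (n : ℕ) : ∑ k ∈ range (2 * n + 2), F k =
    ∑ j ∈ range (n + 1), (F (n + 1 + j) + F (n - j)) := by
  rw [show 2 * n + 2 = (n + 1) + (n + 1) by ring, sum_range_add, sum_add_distrib, add_comm]
  congr 1
  rw [← sum_range_reflect]
  simp

lemma tri (j : ℕ) : (j + 1).choose 2 * 2 = j * (j + 1) := by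
  have := Nat.triangle_succ j
  rw [Nat.choose_two_right]
  have h2 : 2 ∣ (j + 1) * (j + 1 - 1) := by
    simpa [mul_comm] using (Nat.even_mul_succ_self j).two_dvd
  rw [Nat.div_mul_cancel h2]; simp [mul_comm]

lemma tri' (j : ℕ) : j.choose 2 * 2 + j = j * j := by
  rcases j with _ | j
  · simp
  · have := tri j; nlinarith

lemma ex_a (n j : ℕ) (h : j ≤ n) : (n + 1 + j).choose 2 + n * (2 * n + 1 - (n + 1 + j)) =
    (n + 1).choose 2 + n * n + (j+1).choose 2 := by
  obtain ⟨d, rfl⟩ := Nat.exists_eq_add_of_le h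
  have h1 := tri (j + d + j)
  have h2 := tri (j + d)
  have h3 := tri j
  rw [show 2 * (j + d) + 1 - (j + d + 1 + j) = d by omega]
  rw [show j + d + 1 + j = j + d + j + 1 by ring]
  nlinarith

lemma ex_b (n j : ℕ) (h : j ≤ n) : (n - j).choose 2 + n * (2 * n + 1 - (n - j)) =
    (n + 1).choose 2 + n * n + (j+1).choose 2 := by
  obtain ⟨d, rfl⟩ := Nat.exists_eq_add_of_le h
  have h1 := tri' d
  have h2 := tri (j + d)
  have h3 := tri j
  rw [show 2 * (j + d) + 1 - (j + d - j) = 2 * j + d + 1 by omega, show j + d - j = d by omega]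
  nlinarith

lemma prodpow (n : ℕ) : ∏ i ∈ range n, (X : ℤ⟦X⟧) ^ i = X ^ (n.choose 2) := by
  rw [prod_pow_eq_pow_sum, sum_range_id, Nat.choose_two_right]

lemma fin_prod (s : ℤ⟦X⟧) (hs : s * s = 1) (n : ℕ) :
    (∏ i ∈ range n, ((X : ℤ⟦X⟧) ^ n + s * X ^ i)) * ∏ i ∈ range n, (X ^ n + s * X ^ (n + 1 + i)) =
     s ^ n * X ^ (n.choose 2 + n * n) * (∏ i ∈ range n, (1 + s * X ^ (i + 1))) ^ 2 := by
  have e1 : ∏ i ∈ range n, ((X : ℤ⟦X⟧) ^ n + s * X ^ i) =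
     s ^ n * X ^ (n.choose 2) * (∏ i ∈ range n, (1 + s * X ^ (i + 1))) := by
    rw [← prodpow, ← prod_range_reflect (fun i => (X : ℤ⟦X⟧) ^ i),
      ← prod_range_reflect (fun i => (X : ℤ⟦X⟧) ^ n + s * X ^ i)]
    conv_rhs => rw [← card_range n, ← prod_const, card_range]
    rw [← prod_mul_distrib, ← prod_mul_distrib]
    refine prod_congr rfl fun i hi => ?_
    have := mem_range.1 hi
    have h : (X : ℤ⟦X⟧) ^ n = X ^ (n - 1 - i) * X ^ (i + 1) := by
      rw [← pow_add]; congr 1; omega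
    rw [h]; linear_combination (- X ^ (n - 1 - i) * X ^ (i + 1)) * hs
  have e2 : ∏ i ∈ range n, ((X : ℤ⟦X⟧) ^ n + s * X ^ (n + 1 + i)) =
     X ^ (n * n) * (∏ i ∈ range n, (1 + s * X ^ (i + 1))) := by
    rw [pow_mul]
    conv_rhs => rw [← card_range n, ← prod_const, card_range]
    rw [← prod_mul_distrib]
    refine prod_congr rfl fun i hi => ?_
    ring
  rw [e1, e2]; ring

lemma fin_psi (n : ℕ) : 2 * (∏ i ∈ range n, ((1 : ℤ⟦X⟧) + X ^ (i + 1))) ^ 2 =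
    ∑ j ∈ range (n + 1), X ^ ((j + 1).choose 2) *
      (qb (X : ℤ⟦X⟧) (2 * n + 1) (n + 1 + j) + qb X (2 * n + 1) (n - j)) := by
  have h := qbinom (X : ℤ⟦X⟧) (X ^ n) 1 (2 * n + 1)
  rw [sum_split, show 2 * n + 1 = (n + 1) + n by ring, prod_range_add, prod_range_succ] at h
  have h2 := fin_prod 1 (by ring) n
  have h3 : ∑ j ∈ range (n + 1),
      ((X : ℤ⟦X⟧) ^ ((n + 1 + j).choose 2) * qb X (n + 1 + n) (n + 1 + j) * 1 ^ (n + 1 + j) * (X ^ n) ^ (n + 1 + n - (n + 1 + j)) +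
       X ^ ((n - j).choose 2) * qb X (n + 1 + n) (n - j) * 1 ^ (n - j) * (X ^ n) ^ (n + 1 + n - (n - j))) =
     X ^ ((n + 1).choose 2 + n * n) * ∑ j ∈ range (n + 1), X ^ ((j + 1).choose 2) *
      (qb (X : ℤ⟦X⟧) (2 * n + 1) (n + 1 + j) + qb X (2 * n + 1) (n - j)) := by
    rw [mul_sum]
    refine sum_congr rfl fun j hj => ?_
    have hj := Nat.lt_succ_iff.1 (mem_range.1 hj)
    have a := congrArg (fun t => (X : ℤ⟦X⟧) ^ t) (ex_a n j hj)
    have b := congrArg (fun t => (X : ℤ⟦X⟧) ^ t) (ex_b n j hj)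
    simp only [pow_add _ (_ + _) _, pow_add _ (Nat.choose _ _) _, pow_mul] at a b
    rw [show n + 1 + n = 2 * n + 1 by ring]
    simp only [one_pow, mul_one, pow_add _ (Nat.choose _ _) _, pow_mul]
    linear_combination (qb X (2 * n + 1) (n + 1 + j)) * a + qb X (2 * n + 1) (n - j) * b
  rw [h3] at h
  refine mul_left_cancel₀ (pow_ne_zero ((n + 1).choose 2 + n * n) X_ne_zero) ?_
  rw [← h, Nat.choose_succ_succ' n 1, Nat.choose_one_right]
  simp only [one_pow, one_mul] at h2 ⊢
  rw [mul_assoc, mul_comm _ (∏ i ∈ range n, (X ^ n + X ^ (n + 1 + i))), ← mul_assoc, mul_comm] at *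
  linear_combination (-2 * X^n) * h2

lemma fin_jac (n : ℕ) : (∏ i ∈ range n, ((1 : ℤ⟦X⟧) - X ^ (i + 1))) ^ 2 =
    ∑ j ∈ range (n + 1), (-1) ^ j * X ^ ((j + 1).choose 2) *
      (((n + 1 + j : ℕ) : ℤ⟦X⟧) * qb (X : ℤ⟦X⟧) (2 * n + 1) (n + 1 + j) - ((n - j : ℕ) : ℤ⟦X⟧) * qb X (2 * n + 1) (n - j)) := by
  have h := congrArg (fun p => Polynomial.eval (-1) (Polynomial.derivative p))
    (qbinom (Polynomial.C (X : ℤ⟦X⟧)) (Polynomial.C (X ^ n)) Polynomial.X (2 * n + 1))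
  rw [sum_split, show 2 * n + 1 = (n + 1) + n by ring, prod_range_add, prod_range_succ] at h
  have h2 := fin_prod (-1) (by ring) n
  have h4 : Polynomial.eval (-1) (Polynomial.derivative (((∏ i ∈ range n, (Polynomial.C (X ^ n) + Polynomial.X * Polynomial.C X ^ i)) * (Polynomial.C (X ^ n) + Polynomial.X * Polynomial.C X ^ n)) *
    ∏ i ∈ range n, (Polynomial.C (X ^ n) + Polynomial.X * Polynomial.C (X : ℤ⟦X⟧) ^ (n + 1 + i)))) =
     X ^ n * ((∏ i ∈ range n, ((X : ℤ⟦X⟧) ^ n + (-1) * X ^ i)) * ∏ i ∈ range n, (X ^ n + (-1) * X ^ (n + 1 + i))) := by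
    simp only [Polynomial.derivative_mul, Polynomial.derivative_add, Polynomial.eval_add, Polynomial.eval_mul, Polynomial.eval_prod, Polynomial.eval_C, Polynomial.eval_X, Polynomial.derivative_C, Polynomial.derivative_X, Polynomial.eval_pow, ← Polynomial.C_pow, Polynomial.eval_one, Polynomial.eval_zero]
    ring
  rw [h4, h2, Polynomial.derivative_sum, Polynomial.eval_finsetSum] at h
  have h3 : ∀ k : ℕ, Polynomial.eval (-1) (Polynomial.derivative (Polynomial.C (X : ℤ⟦X⟧) ^ k.choose 2 *
      qb (Polynomial.C X) (n + 1 + n) k * Polynomial.X ^ k * Polynomial.C (X ^ n) ^ (n + 1 + n - k))) =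
      X ^ k.choose 2 * qb X (2 * n + 1) k * ((k : ℤ⟦X⟧) * (-1) ^ (k - 1)) * (X ^ n) ^ (2 * n + 1 - k) := by
    intro k
    rw [qb_map, show n + 1 + n = 2 * n + 1 by ring]
    simp only [Polynomial.derivative_mul, Polynomial.derivative_add, Polynomial.eval_add, Polynomial.eval_mul, Polynomial.eval_C, Polynomial.eval_X, Polynomial.derivative_C, Polynomial.derivative_X_pow, Polynomial.eval_pow, ← Polynomial.C_pow, Polynomial.eval_one, Polynomial.eval_zero]
    ring
  simp only [Polynomial.derivative_add, Polynomial.eval_add, h3] at h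
  have hc : ((-1) ^ n * X ^ ((n + 1).choose 2 + n * n) : ℤ⟦X⟧) ≠ 0 :=
    mul_ne_zero (pow_ne_zero _ (by norm_num)) (pow_ne_zero _ X_ne_zero)
  refine mul_left_cancel₀ hc ?_
  rw [mul_sum]
  have h5 : ∀ j ∈ range (n + 1),
     ((-1) ^ n * X ^ ((n + 1).choose 2 + n * n) : ℤ⟦X⟧) * ((-1) ^ j * X ^ ((j + 1).choose 2) *
      (((n + 1 + j : ℕ) : ℤ⟦X⟧) * qb (X : ℤ⟦X⟧) (2 * n + 1) (n + 1 + j) - ((n - j : ℕ) : ℤ⟦X⟧) * qb X (2 * n + 1) (n - j))) =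
      X ^ (n + 1 + j).choose 2 * qb X (2 * n + 1) (n + 1 + j) * (((n + 1 + j : ℕ) : ℤ⟦X⟧) * (-1) ^ ((n + 1 + j) - 1)) * (X ^ n) ^ (2 * n + 1 - (n + 1 + j))
      + X ^ (n - j).choose 2 * qb X (2 * n + 1) (n - j) * (((n - j : ℕ) : ℤ⟦X⟧) * (-1) ^ ((n - j) - 1)) * (X ^ n) ^ (2 * n + 1 - (n - j)) := by
    intro j hj
    have hj := Nat.lt_succ_iff.1 (mem_range.1 hj)
    have a := congrArg (fun t => (X : ℤ⟦X⟧) ^ t) (ex_a n j hj)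
    have b := congrArg (fun t => (X : ℤ⟦X⟧) ^ t) (ex_b n j hj)
    simp only [pow_add _ (_ + _) _, pow_add _ (Nat.choose _ _) _, pow_mul] at a b
    have s1 : ((-1 : ℤ⟦X⟧)) ^ ((n + 1 + j) - 1) = (-1) ^ n * (-1) ^ j := by
      rw [← pow_add]; congr 1; omega
    have s2 : ((n - j : ℕ) : ℤ⟦X⟧) * (-1) ^ ((n - j) - 1) = - (((n - j : ℕ) : ℤ⟦X⟧) * ((-1) ^ n * (-1) ^ j)) := by
      obtain ⟨d, rfl⟩ := Nat.exists_eq_add_of_le hj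
      rw [show j + d - j = d by omega]
      rcases d with _ | d
      · simp
      · have : ((-1 : ℤ⟦X⟧) ^ j) * (-1) ^ j = 1 := by rw [← mul_pow]; simp
        simp only [Nat.add_sub_cancel, pow_add, pow_one]
        linear_combination (-((d + 1 : ℕ) : ℤ⟦X⟧) * (-1) ^ d) * this
    rw [s1, s2]
    simp only [pow_add _ (Nat.choose _ _) _, pow_mul]
    linear_combination (-(-1)^n * (-1)^j * ((n+1+j : ℕ) : ℤ⟦X⟧) * qb X (2 * n + 1) (n + 1 + j)) * a + (-1)^n * (-1)^j * ((n-j : ℕ) : ℤ⟦X⟧) * qb X (2 * n + 1) (n - j) * b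
  rw [sum_congr rfl h5, ← h, Nat.choose_succ_succ' n 1, Nat.choose_one_right]
  have : ∏ i ∈ range n, (1 + (-1 : ℤ⟦X⟧) * X ^ (i + 1)) = ∏ i ∈ range n, (1 - (X : ℤ⟦X⟧) ^ (i + 1)) :=
    prod_congr rfl fun i _ => by ring
  rw [this]; ring

lemma ex_c (n e : ℕ) (h : e ≤ n + 1) : 2 * (n + 1 + e).choose 2 + (2 * n + 1) * (2 * n + 2 - (n + 1 + e)) =
    n * (n + 1) + (2 * n + 1) * (n + 1) + e ^ 2 := by
  obtain ⟨d, hd⟩ := Nat.exists_eq_add_of_le h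
  have h1 := tri (n + e)
  rw [show 2 * n + 2 - (n + 1 + e) = d by omega]
  rw [show n + 1 + e = n + e + 1 by ring]
  have : n + 1 = e + d := hd
  zify at *
  have : (d : ℤ) = n + 1 - e := by linarith
  rw [this]
  linarith

lemma ex_d (n e : ℕ) (h : e ≤ n + 1) : 2 * (n + 1 - e).choose 2 + (2 * n + 1) * (2 * n + 2 - (n + 1 - e)) =
    n * (n + 1) + (2 * n + 1) * (n + 1) + e ^ 2 := by
  obtain ⟨d, hd⟩ := Nat.exists_eq_add_of_le h
  have h1 := tri' d
  rw [show 2 * n + 2 - (n + 1 - e) = n + 1 + e by omega, show n + 1 - e = d by omega]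
  zify at *
  have h3 : (d : ℤ) = n + 1 - e := by linarith
  have h4 : (d.choose 2 : ℤ) * 2 = (n + 1 - e) * (n + 1 - e) - (n + 1 - e) := by rw [← h3]; linarith
  linarith

lemma fin_phi (n : ℕ) : (∏ i ∈ range (n + 1), ((1 : ℤ⟦X⟧) - X ^ (2 * i + 1))) ^ 2 =
    qb (X ^ 2) (2 * n + 2) (n + 1) +
    ∑ j ∈ range (n + 1), (-1) ^ (j + 1) * X ^ ((j + 1) ^ 2) *
      (qb ((X : ℤ⟦X⟧) ^ 2) (2 * n + 2) (n + 1 + (j + 1)) + qb (X ^ 2) (2 * n + 2) (n + 1 - (j + 1))) := by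
  have h := qbinom ((X : ℤ⟦X⟧) ^ 2) (X ^ (2 * n + 1)) (-1) (2 * n + 2)
  have e1 : ∏ i ∈ range (n + 1), ((X : ℤ⟦X⟧) ^ (2 * n + 1) + (-1) * (X ^ 2) ^ i) =
     (-1) ^ (n + 1) * X ^ (n * (n + 1)) * (∏ i ∈ range (n + 1), (1 - X ^ (2 * i + 1))) := by
    have : (X : ℤ⟦X⟧) ^ (n * (n + 1)) = ∏ i ∈ range (n + 1), X ^ (2 * i) := by
      rw [prod_pow_eq_pow_sum, ← mul_sum, sum_range_id, ← Nat.choose_two_right, mul_comm 2, tri]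
    rw [this, ← prod_range_reflect (fun i => (X : ℤ⟦X⟧) ^ (2 * i)),
      ← prod_range_reflect (fun i => (X : ℤ⟦X⟧) ^ (2 * n + 1) + (-1) * (X ^ 2) ^ i)]
    conv_rhs => rw [← card_range (n + 1), ← prod_const, card_range]
    rw [← prod_mul_distrib, ← prod_mul_distrib]
    refine prod_congr rfl fun i hi => ?_
    have := mem_range.1 hi
    have h : (X : ℤ⟦X⟧) ^ (2 * n + 1) = X ^ (2 * (n + 1 - 1 - i)) * X ^ (2 * i + 1) := by
      rw [← pow_add]; congr 1; omega
    rw [h]; ring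
  have e2 : ∏ i ∈ range (n + 1), ((X : ℤ⟦X⟧) ^ (2 * n + 1) + (-1) * (X ^ 2) ^ (n + 1 + i)) =
     X ^ ((2 * n + 1) * (n + 1)) * (∏ i ∈ range (n + 1), (1 - X ^ (2 * i + 1))) := by
    rw [pow_mul]
    conv_rhs => rw [← card_range (n + 1), ← prod_const, card_range]
    rw [← prod_mul_distrib]
    refine prod_congr rfl fun i hi => ?_
    ring
  rw [show 2 * n + 2 + 1 = (n + 1) + 1 + (n + 1) by ring, sum_range_add, sum_range_succ, ← sum_range_reflect] at h
  nth_rw 1 [show 2 * n + 2 = (n + 1) + (n + 1) by ring] at h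
  rw [prod_range_add, e1, e2] at h
  have hc : ((-1) ^ (n + 1) * X ^ (n * (n + 1) + (2 * n + 1) * (n + 1)) : ℤ⟦X⟧) ≠ 0 :=
    mul_ne_zero (pow_ne_zero _ (by norm_num)) (pow_ne_zero _ X_ne_zero)
  refine mul_left_cancel₀ hc ?_
  have hA : ∀ e ≤ n + 1, ((X : ℤ⟦X⟧) ^ 2) ^ (n + 1 + e).choose 2 * (X ^ (2 * n + 1)) ^ (2 * n + 2 - (n + 1 + e))
     = X ^ (n * (n + 1) + (2 * n + 1) * (n + 1)) * X ^ (e ^ 2) := by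
    intro e he
    rw [← pow_mul, ← pow_mul, ← pow_add, ← pow_add, ex_c n e he]
  have hB : ∀ e ≤ n + 1, ((X : ℤ⟦X⟧) ^ 2) ^ (n + 1 - e).choose 2 * (X ^ (2 * n + 1)) ^ (2 * n + 2 - (n + 1 - e))
     = X ^ (n * (n + 1) + (2 * n + 1) * (n + 1)) * X ^ (e ^ 2) := by
    intro e he
    rw [← pow_mul, ← pow_mul, ← pow_add, ← pow_add, ex_d n e he]
  trans (-1) ^ (n + 1) * X ^ (n * (n + 1)) * (∏ i ∈ range (n + 1), (1 - X ^ (2 * i + 1))) * (X ^ ((2 * n + 1) * (n + 1)) * (∏ i ∈ range (n + 1), (1 - X ^ (2 * i + 1))))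
  · ring
  rw [h, mul_add, add_right_comm, add_comm, ← sum_add_distrib, mul_sum]
  congr 1
  · have := hA 0 (by omega)
    simp only [add_zero] at this
    linear_combination ((-1) ^ (n+1) * qb (X ^ 2) (2 * n + 2) (n + 1)) * this
  · refine sum_congr rfl fun j hj => ?_
    have hj := mem_range.1 hj
    have a := hA (j + 1) (by omega)
    have b := hB (j + 1) (by omega)
    have s2 : (-1 : ℤ⟦X⟧) ^ (n + 1 - (j + 1)) = (-1) ^ (n + 1) * (-1) ^ (j + 1) := by
      obtain ⟨d, hd⟩ := Nat.exists_eq_add_of_le (show j + 1 ≤ n + 1 by omega)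
      have : ((-1 : ℤ⟦X⟧) ^ (j + 1)) * (-1) ^ (j + 1) = 1 := by rw [← mul_pow]; simp
      rw [hd, show j + 1 + d - (j + 1) = d by omega, pow_add _ (j+1) d]
      linear_combination (-(-1) ^ d) * this
    rw [show n + 1 + 1 + j = n + 1 + (j + 1) by ring, show n + 1 - 1 - j = n + 1 - (j + 1) by omega, s2,
      pow_add (-1 : ℤ⟦X⟧) (n+1) (j+1)]
    linear_combination ((-1) ^ (n+1) * (-1) ^ (j+1) * qb (X ^ 2) (2 * n + 2) (n + 1 + (j + 1))) * a + ((-1) ^ (n+1) * (-1) ^ (j+1) * qb (X ^ 2) (2 * n + 2) (n + 1 - (j + 1))) * b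

end OP

namespace OP
open PowerSeries Finset Filter Topology
open scoped PowerSeries.WithPiTopology

lemma dvd_of_tendsto {u : ℕ → ℤ⟦X⟧} {P : ℤ⟦X⟧} (h : Tendsto u atTop (𝓝 P)) (n k : ℕ)
    (hd : ∀ m ≥ n, (X : ℤ⟦X⟧) ^ k ∣ u m - u n) : (X : ℤ⟦X⟧) ^ k ∣ P - u n := by
  rw [X_pow_dvd_iff]
  intro d hdk
  rw [WithPiTopology.tendsto_iff_coeff_tendsto] at h
  have h1 := h d
  have h2 : Tendsto (fun i => coeff d (u i)) atTop (𝓝 (coeff d (u n))) := by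
    refine tendsto_atTop_of_eventually_const (i₀ := n) fun m hm => ?_
    have := (X_pow_dvd_iff.1 (hd m hm)) d hdk
    rw [map_sub] at this; linarith
  rw [map_sub, tendsto_nhds_unique h1 h2, sub_self]

lemma prod_trunc {s : ℤ⟦X⟧} {e : ℕ → ℕ} {P : ℤ⟦X⟧} (h : HasProd (fun i => 1 + s * X ^ (e i)) P)
    (n k : ℕ) (he : ∀ i ≥ n, k ≤ e i) :
    (X : ℤ⟦X⟧) ^ k ∣ P - ∏ i ∈ range n, (1 + s * X ^ (e i)) := by
  refine dvd_of_tendsto h.tendsto_prod_nat n k fun m hm => ?_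
  induction m, hm using Nat.le_induction with
  | base => simp
  | succ m hm ih =>
    rw [prod_range_succ, mul_add, mul_one, add_sub_right_comm]
    refine dvd_add ih (Dvd.dvd.mul_left (Dvd.dvd.mul_left (pow_dvd_pow _ (he m hm)) _) _)

lemma sum_trunc {c : ℕ → ℤ⟦X⟧} {e : ℕ → ℕ} {P : ℤ⟦X⟧} (h : HasSum (fun i => c i * X ^ (e i)) P)
    (n k : ℕ) (he : ∀ i ≥ n, k ≤ e i) :
    (X : ℤ⟦X⟧) ^ k ∣ P - ∑ i ∈ range n, (c i * X ^ (e i)) := by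
  refine dvd_of_tendsto h.tendsto_sum_nat n k fun m hm => ?_
  induction m, hm using Nat.le_induction with
  | base => simp
  | succ m hm ih =>
    rw [sum_range_succ, add_sub_right_comm]
    refine dvd_add ih (Dvd.dvd.mul_left (pow_dvd_pow _ (he m hm)) _)

lemma tend_ord (c : ℕ → ℤ⟦X⟧) (e : ℕ → ℕ) (he : ∀ i, i ≤ e i) :
    Tendsto (fun i ↦ (c i * X ^ (e i)).order) atTop (𝓝 ⊤) := by
  refine ENat.tendsto_nhds_top_iff_natCast_lt.mpr fun n ↦ eventually_atTop.mpr ⟨n + 1, ?_⟩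
  intro m hm
  grw [← le_order_mul, order_X_pow]
  refine lt_add_of_nonneg_of_lt (by simp) ?_
  have := he m
  norm_cast
  omega

lemma mult (s : ℤ⟦X⟧) (e : ℕ → ℕ) (he : ∀ i, i ≤ e i) : Multipliable (fun i => 1 + s * X ^ (e i)) :=
  WithPiTopology.multipliable_one_add_of_tendsto_order_atTop_nhds_top _ (tend_ord (fun _ => s) e he)

lemma summ (c : ℕ → ℤ⟦X⟧) (e : ℕ → ℕ) (he : ∀ i, i ≤ e i) : Summable (fun i => c i * X ^ (e i)) :=
  WithPiTopology.summable_of_tendsto_order_atTop_nhds_top _ (tend_ord c e he)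

lemma eq_of_dvd {a b : ℤ⟦X⟧} (h : ∀ n, (X : ℤ⟦X⟧) ^ (n + 1) ∣ a - b) : a = b := by
  ext n
  have := X_pow_dvd_iff.1 (h n) n (by omega)
  rw [map_sub] at this; linarith

noncomputable def F : ℤ⟦X⟧ := ∏' i : ℕ, (1 + (-1) * X ^ (i + 1))
noncomputable def D : ℤ⟦X⟧ := ∏' i : ℕ, (1 + 1 * X ^ (i + 1))
noncomputable def A : ℤ⟦X⟧ := ∏' i : ℕ, (1 + (-1) * X ^ (2 * i + 1))
noncomputable def Ap : ℤ⟦X⟧ := ∏' i : ℕ, (1 + 1 * X ^ (2 * i + 1))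

lemma hF : HasProd (fun i : ℕ => 1 + (-1 : ℤ⟦X⟧) * X ^ (i + 1)) F := (mult (-1) (fun i => i + 1) (fun i => by omega)).hasProd
lemma hD : HasProd (fun i : ℕ => 1 + (1 : ℤ⟦X⟧) * X ^ (i + 1)) D := (mult 1 (fun i => i + 1) (fun i => by omega)).hasProd
lemma hA : HasProd (fun i : ℕ => 1 + (-1 : ℤ⟦X⟧) * X ^ (2 * i + 1)) A := (mult (-1) (fun i => 2 * i + 1) (fun i => by omega)).hasProd
lemma hAp : HasProd (fun i : ℕ => 1 + (1 : ℤ⟦X⟧) * X ^ (2 * i + 1)) Ap := (mult 1 (fun i => 2 * i + 1) (fun i => by omega)).hasProd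

noncomputable def ex (k : ℕ) [NeZero k] : ℤ⟦X⟧ →+* ℤ⟦X⟧ := (expand k (NeZero.ne k)).toRingHom

section
variable (k : ℕ) [NeZero k]

lemma coeff_ex (f : ℤ⟦X⟧) (n : ℕ) : coeff n (ex k f) = if k ∣ n then coeff (n / k) f else 0 :=
  coeff_expand k (NeZero.ne k) f

lemma ex_X : ex k X = X ^ k := expand_X k (NeZero.ne k)

lemma ex_cont : Continuous (ex k) := by
  rw [continuous_iff_continuousAt]
  intro f
  rw [ContinuousAt, WithPiTopology.tendsto_iff_coeff_tendsto]
  intro d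
  simp only [coeff_ex]
  split_ifs
  · exact (WithPiTopology.continuous_coeff ℤ (d / k)).continuousAt
  · exact tendsto_const_nhds

lemma ex_inj : Function.Injective (ex k) := by
  intro a b h
  ext n
  have := congrArg (coeff (k * n)) h
  simpa [coeff_ex, Nat.mul_div_cancel_left n (Nat.pos_of_neZero k)] using this

lemma ex_ex (l : ℕ) [NeZero l] (m : ℕ) [NeZero m] (h : m = k * l) (f : ℤ⟦X⟧) : ex k (ex l f) = ex m f := by
  subst h
  exact (expand_mul k (NeZero.ne k) l (NeZero.ne l) f).symm

lemma ex_const (f : ℤ⟦X⟧) : constantCoeff (ex k f) = constantCoeff f :=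
  constantCoeff_expand k (NeZero.ne k) f
end

noncomputable def rs : ℤ⟦X⟧ →+* ℤ⟦X⟧ := rescale (-1)

lemma rs_X : rs X = - X := rescale_neg_one_X

lemma coeff_rs (f : ℤ⟦X⟧) (n : ℕ) : coeff n (rs f) = (-1) ^ n * coeff n f := coeff_rescale _ _ _

lemma rs_cont : Continuous rs := by
  rw [continuous_iff_continuousAt]
  intro f
  rw [ContinuousAt, WithPiTopology.tendsto_iff_coeff_tendsto]
  intro d
  simp only [coeff_rs]
  exact ((WithPiTopology.continuous_coeff ℤ d).const_mul _ |>.continuousAt)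

lemma rs_ex (k : ℕ) [NeZero k] (h : Even k) (f : ℤ⟦X⟧) : rs (ex k f) = ex k f := by
  ext n
  rw [coeff_rs, coeff_ex]
  split_ifs with hd
  · rw [(h.trans_dvd hd).neg_one_pow, one_mul]
  · simp

lemma rs_A : rs A = Ap := by
  have := hA.map rs rs_cont
  refine this.unique ?_
  convert! hAp using 1
  ext1 i
  simp [rs_X, pow_add, pow_mul]

lemma const_F : constantCoeff F = 1 := by
  have := X_dvd_iff.1 (by simpa using prod_trunc hF 0 1 (by intros; omega))
  simp at this; linarith

lemma const_A : constantCoeff A = 1 := by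
  have := X_dvd_iff.1 (by simpa using prod_trunc hA 0 1 (by intros; omega))
  simp at this; linarith

lemma unit_F : IsUnit F := by rw [isUnit_iff_constantCoeff, const_F]; exact isUnit_one

lemma ex_unit (k : ℕ) [NeZero k] {f : ℤ⟦X⟧} (h : IsUnit f) : IsUnit (ex k f) := h.map (ex k)

lemma F_eq : F = A * ex 2 F := by
  have h1 : HasProd (fun i : ℕ => 1 + (-1 : ℤ⟦X⟧) * X ^ (2 * i + 1 + 1)) (ex 2 F) := by
    convert! hF.map (ex 2) (ex_cont 2) using 1
    ext1 i
    simp [ex_X, ← pow_mul]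
    ring
  exact hF.unique (HasProd.even_mul_odd (f := fun i : ℕ => 1 + (-1 : ℤ⟦X⟧) * X ^ (i + 1)) hA h1)

lemma DF : D * F = ex 2 F := by
  refine (hD.mul hF).unique ?_
  convert! hF.map (ex 2) (ex_cont 2) using 1
  ext1 i
  simp [ex_X, ← pow_mul]
  ring

lemma DA : D * A = 1 := by
  have h := DF
  rw [F_eq] at h
  have h2 : ex 2 (A * ex 2 F) = ex 2 F := by rw [← F_eq]
  rw [h2] at h
  refine (ex_unit 2 unit_F).mul_left_injective ?_
  simp only; rw [one_mul, mul_assoc, h]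

lemma AAp : A * Ap = ex 2 A := by
  refine (hA.mul hAp).unique ?_
  convert! hA.map (ex 2) (ex_cont 2) using 1
  ext1 i
  simp [ex_X, ← pow_mul]
  ring

lemma qb_approx (q G : ℤ⟦X⟧) (hG : IsUnit G) (h : ∀ n, q ^ (n + 1) ∣ G - E q n) (a b c m : ℕ) (hm : m = a + b)
    (ha : c ≤ a) (hb : c ≤ b) : q ^ (c + 1) ∣ G * qb q m a - 1 := by
  subst hm
  have h1 := (pow_dvd_pow q (by omega : c + 1 ≤ a + 1)).trans (h a)
  have h2 := (pow_dvd_pow q (by omega : c + 1 ≤ b + 1)).trans (h b)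
  have h3 := (pow_dvd_pow q (by omega : c + 1 ≤ a + b + 1)).trans (h (a + b))
  have hf := qb_fact q a b
  have : q ^ (c + 1) ∣ (G * G) * (G * qb q (a + b) a - 1) := by
    have e : (G * G) * (G * qb q (a + b) a - 1) =
      G * qb q (a + b) a * (G * (G - E q b) + (G - E q a) * E q b) - G * (G - E q (a + b)) := by
      linear_combination G * hf
    rw [e]
    exact dvd_sub (Dvd.dvd.mul_left (dvd_add (Dvd.dvd.mul_left h2 _) (Dvd.dvd.mul_right h1 _)) _) (Dvd.dvd.mul_left h3 _)
  exact (hG.mul hG).dvd_mul_left.1 this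

lemma F_E (n : ℕ) : (X : ℤ⟦X⟧) ^ (n + 1) ∣ F - E X n := by
  have := prod_trunc hF n (n + 1) (by intros; omega)
  simpa [E, sub_eq_add_neg] using this

lemma F2_E (n : ℕ) : ((X : ℤ⟦X⟧) ^ 2) ^ (n + 1) ∣ ex 2 F - E (X ^ 2) n := by
  have := map_dvd (ex 2) (F_E n)
  simpa [E, ex_X] using this

noncomputable def S : ℤ⟦X⟧ := ∑' j : ℕ, (-1) ^ (j + 1) * X ^ ((j + 1) ^ 2)
noncomputable def phim : ℤ⟦X⟧ := 1 + 2 * S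
noncomputable def phip : ℤ⟦X⟧ := rs phim
noncomputable def psi : ℤ⟦X⟧ := ∑' j : ℕ, 1 * X ^ ((j + 1).choose 2)
noncomputable def J : ℤ⟦X⟧ := ∑' j : ℕ, ((-1) ^ j * (2 * (j : ℤ⟦X⟧) + 1)) * X ^ ((j + 1).choose 2)

lemma tri_ge (j : ℕ) : j ≤ (j + 1).choose 2 := by
  have := tri j
  nlinarith [mul_self_nonneg j, Nat.le_mul_self j]

lemma hS : HasSum (fun j : ℕ => (-1 : ℤ⟦X⟧) ^ (j + 1) * X ^ ((j + 1) ^ 2)) S :=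
  (summ (fun j => (-1) ^ (j + 1)) (fun j => (j + 1) ^ 2) (fun i => by nlinarith)).hasSum
lemma hpsi : HasSum (fun j : ℕ => (1 : ℤ⟦X⟧) * X ^ ((j + 1).choose 2)) psi :=
  (summ (fun j => 1) (fun j => (j + 1).choose 2) tri_ge).hasSum
lemma hJ : HasSum (fun j : ℕ => ((-1 : ℤ⟦X⟧) ^ j * (2 * (j : ℤ⟦X⟧) + 1)) * X ^ ((j + 1).choose 2)) J :=
  (summ (fun j => (-1) ^ j * (2 * (j : ℤ⟦X⟧) + 1)) (fun j => (j + 1).choose 2) tri_ge).hasSum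

lemma psi_eq : F * D ^ 2 = psi := by
  have h2 : (2 : ℤ⟦X⟧) ≠ 0 := by
    intro h; have := congrArg constantCoeff h; rw [map_ofNat, map_zero] at this; norm_num at this
  refine mul_left_cancel₀ h2 (eq_of_dvd fun n => ?_)
  have a := prod_trunc hD n (n + 1) (by intros; omega)
  have b := sum_trunc hpsi (n + 1) (n + 1) (fun i hi => hi.trans (tri_ge i))
  have c := fin_psi n
  simp only [one_mul] at a b
  set d := ∏ i ∈ range n, (1 + (X : ℤ⟦X⟧) ^ (i + 1))
  set p := ∑ i ∈ range (n + 1), (X : ℤ⟦X⟧) ^ ((i + 1).choose 2)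
  have e : (X : ℤ⟦X⟧) ^ (n + 1) ∣ F * (2 * d ^ 2) - 2 * p := by
    rw [c, mul_sum, mul_sum, ← sum_sub_distrib]
    refine dvd_sum fun j hj => ?_
    have hj := mem_range.1 hj
    have h1 := qb_approx X F unit_F F_E (n + 1 + j) (n - j) (n - j) (2 * n + 1) (by omega) (by omega) le_rfl
    have h2 := qb_approx X F unit_F F_E (n - j) (n + 1 + j) (n - j) (2 * n + 1) (by omega) le_rfl (by omega)
    have h3 := mul_dvd_mul (dvd_refl ((X : ℤ⟦X⟧) ^ (j + 1).choose 2)) (dvd_add h1 h2)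
    rw [← pow_add] at h3
    have := tri_ge j
    refine ((pow_dvd_pow X (by omega)).trans h3).trans (dvd_of_eq ?_)
    ring
  have : 2 * (F * D ^ 2) - 2 * psi = 2 * F * (D + d) * (D - d) - 2 * (psi - p) + (F * (2 * d ^ 2) - 2 * p) := by ring
  rw [this]
  exact dvd_add (dvd_sub (Dvd.dvd.mul_left a _) (Dvd.dvd.mul_left b _)) e

lemma J_eq : F ^ 3 = J := by
  refine eq_of_dvd fun n => ?_
  have a := F_E n
  have b := sum_trunc hJ (n + 1) (n + 1) (fun i hi => hi.trans (tri_ge i))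
  have c := fin_jac n
  change E X n ^ 2 = _ at c
  set p := ∑ j ∈ range (n + 1), ((-1 : ℤ⟦X⟧) ^ j * (2 * (j : ℤ⟦X⟧) + 1)) * X ^ ((j + 1).choose 2)
  have e : (X : ℤ⟦X⟧) ^ (n + 1) ∣ F * E X n ^ 2 - p := by
    rw [c, mul_sum, ← sum_sub_distrib]
    refine dvd_sum fun j hj => ?_
    have hj := mem_range.1 hj
    have h1 := qb_approx X F unit_F F_E (n + 1 + j) (n - j) (n - j) (2 * n + 1) (by omega) (by omega) le_rfl
    have h2 := qb_approx X F unit_F F_E (n - j) (n + 1 + j) (n - j) (2 * n + 1) (by omega) le_rfl (by omega)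
    have h3 := mul_dvd_mul (dvd_refl ((X : ℤ⟦X⟧) ^ (j + 1).choose 2)) (dvd_sub (h1.mul_left (((n + 1 + j : ℕ) : ℤ⟦X⟧))) (h2.mul_left ((n - j : ℕ) : ℤ⟦X⟧)))
    rw [← pow_add] at h3
    have := tri_ge j
    refine ((pow_dvd_pow X (by omega)).trans (h3.mul_left ((-1) ^ j))).trans (dvd_of_eq ?_)
    have e1 : ((n + 1 + j : ℕ) : ℤ⟦X⟧) = ((n - j : ℕ) : ℤ⟦X⟧) + (2 * j + 1) := by
      rw [show n + 1 + j = (n - j) + (2 * j + 1) by omega]; push_cast; ring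
    rw [e1]
    ring
  have : F ^ 3 - J = F * (F + E X n) * (F - E X n) - (J - p) + (F * E X n ^ 2 - p) := by ring
  rw [this]
  exact dvd_add (dvd_sub (Dvd.dvd.mul_left a _) b) e

lemma phim_eq : ex 2 F * A ^ 2 = phim := by
  refine eq_of_dvd fun n => ?_
  have a := prod_trunc hA (n + 1) (n + 1) (by intros; omega)
  have b := sum_trunc hS (n + 1) (n + 1) (fun i hi => by nlinarith)
  have c := fin_phi n
  have a' : ∏ i ∈ range (n + 1), (1 + (-1 : ℤ⟦X⟧) * X ^ (2 * i + 1)) = ∏ i ∈ range (n + 1), (1 - X ^ (2 * i + 1)) :=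
    prod_congr rfl fun i _ => by ring
  rw [a'] at a
  set d := ∏ i ∈ range (n + 1), (1 - (X : ℤ⟦X⟧) ^ (2 * i + 1))
  set p := ∑ j ∈ range (n + 1), (-1 : ℤ⟦X⟧) ^ (j + 1) * X ^ ((j + 1) ^ 2)
  have u := ex_unit 2 unit_F
  have e : (X : ℤ⟦X⟧) ^ (n + 1) ∣ ex 2 F * d ^ 2 - (1 + 2 * p) := by
    have h0 := qb_approx (X ^ 2) (ex 2 F) u F2_E (n + 1) (n + 1) (n + 1) (2 * n + 2) (by omega) le_rfl le_rfl
    rw [← pow_mul] at h0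
    have e0 : ex 2 F * d ^ 2 - (1 + 2 * p) = (ex 2 F * qb (X ^ 2) (2 * n + 2) (n + 1) - 1) +
       (ex 2 F * (∑ j ∈ range (n + 1), (-1) ^ (j + 1) * X ^ ((j + 1) ^ 2) *
      (qb ((X : ℤ⟦X⟧) ^ 2) (2 * n + 2) (n + 1 + (j + 1)) + qb (X ^ 2) (2 * n + 2) (n + 1 - (j + 1)))) - 2 * p) := by
      rw [c]; ring
    rw [e0]
    refine dvd_add ((pow_dvd_pow X (by omega)).trans h0) ?_
    rw [mul_sum, mul_sum, ← sum_sub_distrib]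
    refine dvd_sum fun j hj => ?_
    have hj := mem_range.1 hj
    have h1 := qb_approx (X ^ 2) (ex 2 F) u F2_E (n + 1 + (j + 1)) (n + 1 - (j + 1)) (n - j) (2 * n + 2) (by omega) (by omega) (by omega)
    have h2 := qb_approx (X ^ 2) (ex 2 F) u F2_E (n + 1 - (j + 1)) (n + 1 + (j + 1)) (n - j) (2 * n + 2) (by omega) (by omega) (by omega)
    have h3 := mul_dvd_mul (dvd_refl ((X : ℤ⟦X⟧) ^ ((j + 1) ^ 2))) (dvd_add h1 h2)
    rw [← pow_mul, ← pow_add] at h3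
    have : j + 1 ≤ (j + 1) ^ 2 := by nlinarith
    refine ((pow_dvd_pow X (by omega)).trans (h3.mul_left ((-1) ^ (j + 1)))).trans (dvd_of_eq ?_)
    ring
  have : ex 2 F * A ^ 2 - phim = ex 2 F * (A + d) * (A - d) - 2 * (S - p) + (ex 2 F * d ^ 2 - (1 + 2 * p)) := by
    rw [phim]; ring
  rw [this]
  exact dvd_add (dvd_sub (Dvd.dvd.mul_left a _) (Dvd.dvd.mul_left b _)) e

lemma phim_FA : phim = F * A := by rw [← phim_eq]; nth_rw 2 [F_eq]; ring

lemma const_phim : constantCoeff phim = 1 := by rw [phim_FA, map_mul, const_F, const_A, one_mul]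

lemma unit_phim : IsUnit phim := by rw [isUnit_iff_constantCoeff, const_phim]; exact isUnit_one

lemma T1 : phip * phim = ex 2 phim ^ 2 := by
  have h : phip = ex 2 F * Ap ^ 2 := by
    rw [phip, ← phim_eq, map_mul, map_pow, rs_A, rs_ex 2 (by decide)]
  have h2 : ex 2 phim = ex 2 F * (A * Ap) := by rw [phim_FA, map_mul, AAp]
  rw [h, h2, ← phim_eq]; ring

lemma T2 : phim = ex 4 phip - 2 * X * ex 8 psi := by
  have h1 : HasSum (fun i : ℕ => (-1 : ℤ⟦X⟧) ^ (2 * i + 1) * X ^ ((2 * i + 1) ^ 2)) (- X * ex 8 psi) := by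
    convert! (hpsi.map (ex 8) (ex_cont 8)).mul_left (-X) using 1
    ext1 i
    have := tri i
    simp only [Function.comp, map_mul, map_pow, ex_X, map_one, one_mul]
    rw [show (2 * i + 1) ^ 2 = 1 + 8 * (i + 1).choose 2 by nlinarith, (odd_two_mul_add_one i).neg_one_pow, pow_add, pow_mul]
    ring
  have h2 : HasSum (fun i : ℕ => (-1 : ℤ⟦X⟧) ^ (2 * i + 1 + 1) * X ^ ((2 * i + 1 + 1) ^ 2)) (ex 4 (rs S)) := by
    convert! (hS.map rs rs_cont).map (ex 4) (ex_cont 4) using 1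
    ext1 i
    simp only [Function.comp, map_mul, map_pow, map_neg, ex_X, rs_X, map_one]
    rw [show 2 * i + 1 + 1 = 2 * (i + 1) by ring, pow_mul, neg_one_sq, one_pow, one_mul, neg_pow (X ^ 4), ← mul_assoc, ← pow_add, ← pow_mul,
      (show Even (i + 1 + (i + 1) ^ 2) by rw [show i + 1 + (i + 1) ^ 2 = (i + 1) * (i + 1 + 1) by ring]; exact Nat.even_mul_succ_self _).neg_one_pow, one_mul]
    congr 1; ring
  have h3 := hS.unique (HasSum.even_add_odd (f := fun j : ℕ => (-1 : ℤ⟦X⟧) ^ (j + 1) * X ^ ((j + 1) ^ 2)) h1 h2)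
  rw [phip, phim]
  nth_rw 1 [h3]
  simp only [map_add, map_mul, map_one, map_ofNat]
  ring

lemma T2' : phip = ex 4 phip + 2 * X * ex 8 psi := by
  nth_rw 1 [phip]; rw [T2]
  simp only [map_sub, map_mul, map_ofNat, rs_X, rs_ex 4 (by decide), rs_ex 8 (by decide)]
  ring

lemma T3 : phip ^ 2 = ex 2 phip ^ 2 + 4 * X * ex 4 psi ^ 2 := by
  have h : phim ^ 2 = ex 2 phip ^ 2 - 4 * X * ex 4 psi ^ 2 := by
    apply ex_inj 2
    have := T1
    simp only [map_sub, map_mul, map_ofNat, map_pow, ex_X, ex_ex 2 2 4 rfl, ex_ex 2 4 8 rfl]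
    linear_combination -this + phim * T2' + (ex 4 phip + 2 * X * ex 8 psi) * T2
  have h2 := congrArg rs h
  simp only [map_sub, map_mul, map_ofNat, map_pow, rs_X, rs_ex 4 (by decide), rs_ex 2 (by decide)] at h2
  rw [← phip] at h2
  linear_combination h2

lemma G : psi ^ 2 * phim = ex 2 J := by
  rw [← psi_eq, phim_FA, ← J_eq, map_pow, ← DF]
  linear_combination (F ^ 3 * D ^ 3) * DA

end OP

namespace OP
open PowerSeries Finset Filter Topology
open scoped PowerSeries.WithPiTopology

noncomputable def Mg : ℤ⟦X⟧ := PowerSeries.mk fun n => (#(Nat.Partition.restricted n (fun i => i % 8 ≠ 4)) : ℤ)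
noncomputable def Lg : ℤ⟦X⟧ := PowerSeries.mk fun n =>
  (((Nat.Partition.distincts n).filter (fun lam => ∀ i ∈ lam.parts, i % 8 ≠ 4)).card : ℤ)
noncomputable def P : ℤ⟦X⟧ := PowerSeries.mk fun n => (regularOverpartitions 4 8 n : ℤ)

lemma P_eq : P = Lg * Mg := by
  ext n
  rw [coeff_mul, Finset.Nat.sum_antidiagonal_eq_sum_range_succ_mk]
  simp [P, Lg, Mg, regularOverpartitions, Nat.Partition.restricted]

lemma hM : HasProd (fun i => if (i + 1) % 8 ≠ 4 then ∑' j : ℕ, (X : ℤ⟦X⟧) ^ ((i + 1) * j) else 1) Mg :=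
  Nat.Partition.hasProd_powerSeriesMk_card_restricted ℤ (fun i => i % 8 ≠ 4)

lemma hL : HasProd (fun i => if (i + 1) % 8 ≠ 4 then 1 + (X : ℤ⟦X⟧) ^ (i + 1) else 1) Lg := by
  convert! Nat.Partition.hasProd_genFun (fun i c ↦ if i % 8 ≠ 4 ∧ c < 2 then (1 : ℤ) else 0) using 1
  · ext1 i
    rw [tsum_eq_single 0]
    · split_ifs with h1 h2 h3
      · simp only [zero_add, mul_one]
        exact congrArg _ (one_smul ℤ _).symm
      · exact absurd ⟨h1, by norm_num⟩ h2
      · exact absurd h3.1 h1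
      · exact ((congrArg _ (zero_smul ℤ _)).trans (add_zero _)).symm
    · intro b hb
      have : ¬ (b + 1 < 2) := by omega
      rw [if_neg (fun h => this h.2)]
      exact zero_smul ℤ _
  · ext n
    rw [Lg, coeff_mk, Nat.Partition.coeff_genFun, ← Nat.Partition.countRestricted_two, Nat.Partition.countRestricted,
      filter_filter]
    simp_rw [card_filter, Finsupp.prod, prod_boole]
    push_cast
    refine sum_congr rfl fun x _ => if_congr ?_ rfl rfl
    simp
    grind

lemma h4 (s : ℤ⟦X⟧) (R : ℤ⟦X⟧) (hs : ex 4 s = s) (h : HasProd (fun i : ℕ => 1 + s * X ^ (2 * i + 1)) R) :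
    HasProd (fun i => if (i + 1) % 8 = 4 then 1 + s * (X : ℤ⟦X⟧) ^ (i + 1) else 1) (ex 4 R) := by
  have hg : Function.Injective (fun i : ℕ => 8 * i + 3) := fun a b h => by simpa using h
  refine (hg.hasProd_iff ?_).1 ?_
  · intro x hx
    rw [if_neg]
    intro h
    exact hx ⟨x / 8, by simp; omega⟩
  · convert! h.map (ex 4) (ex_cont 4) using 1
    ext1 i
    have : (8 * i + 3 + 1) % 8 = 4 := by omega
    simp only [Function.comp, this, if_true, map_add, map_one, map_mul, map_pow, ex_X, hs, ← pow_mul]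
    congr 3; ring

lemma L_eq : Lg * ex 4 Ap = D := by
  refine (hL.mul (h4 1 Ap (map_one _) hAp)).unique ?_
  convert! hD using 1
  ext1 i
  by_cases h : (i + 1) % 8 = 4 <;> simp [h]

lemma M_eq : Mg * F = ex 4 A := by
  refine (hM.mul hF).unique ?_
  convert! h4 (-1) A (by simp) hA using 1
  ext1 i
  by_cases h : (i + 1) % 8 = 4
  · simp [h]
  · simp only [h, ne_eq, not_false_eq_true, if_true, if_false]
    have := WithPiTopology.tsum_pow_mul_one_sub_of_constantCoeff_eq_zero (f := (X : ℤ⟦X⟧) ^ (i + 1)) (by simp)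
    simp_rw [← pow_mul] at this
    linear_combination this

lemma P_main : P * ex 8 phim * phim = ex 4 phim := by
  have h1 : ex 4 A * ex 4 Ap = ex 8 A := by rw [← map_mul, AAp, ex_ex 4 2 8 rfl]
  have h2 : ex 8 F * ex 4 A ^ 2 = ex 4 phim := by rw [← phim_eq, map_mul, ex_ex 4 2 8 rfl, map_pow]
  have h3 : ex 8 phim = ex 8 F * ex 8 A := by rw [phim_FA, map_mul]
  rw [P_eq, h3, ← h1, ← h2, phim_FA]
  linear_combination (Mg * F * ex 8 F * ex 4 A * A) * L_eq + (D * A * ex 8 F * ex 4 A) * M_eq + ex 8 F * ex 4 A ^ 2 * DA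

lemma P_struct : ∃ U0 U1 U2 : ℤ⟦X⟧, P = ex 4 U0 + X * ex 2 U1 + 4 * X ^ 2 * ex 16 J + 32 * U2 := by
  have t1 := T1
  have t1a : ex 2 phip * ex 2 phim = ex 4 phim ^ 2 := by
    have := congrArg (ex 2) T1
    simpa [ex_ex 2 2 4 rfl] using this
  have t1b : ex 4 phip * ex 4 phim = ex 8 phim ^ 2 := by
    have := congrArg (ex 4) T1
    simpa [ex_ex 4 2 8 rfl] using this
  have t3 : ex 2 phip ^ 2 = ex 4 phip ^ 2 + 4 * X ^ 2 * ex 8 psi ^ 2 := by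
    have := congrArg (ex 2) T3
    simpa only [map_mul, map_add, map_pow, map_ofNat, ex_ex 2 2 4 rfl, ex_ex 2 4 8 rfl, ex_X] using this
  have g : ex 8 psi ^ 2 * ex 8 phim = ex 16 J := by
    have := congrArg (ex 8) G
    simpa [ex_ex 8 2 16 rfl] using this
  have t2 := T2'
  obtain ⟨v, hv⟩ := isUnit_iff_exists_inv.1 unit_phim
  have hv4 : ex 4 phim * ex 4 v = 1 := by rw [← map_mul, hv, map_one]
  have hv8 : ex 8 phim * ex 8 v = 1 := by rw [← map_mul, hv, map_one]
  have ha : ∃ w, ex 4 phim ^ 4 = 1 + 8 * w :=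
    ⟨ex 4 S + 3 * ex 4 S ^ 2 + 4 * ex 4 S ^ 3 + 2 * ex 4 S ^ 4, by
      simp only [phim, map_add, map_one, map_mul, map_ofNat]; ring⟩
  obtain ⟨w, hw⟩ := ha
  have key : P * ex 4 phim ^ 4 * ex 8 phim = ex 8 phim ^ 2 * ex 4 phip ^ 2 + 4 * X ^ 2 * ex 16 J * ex 8 phim
      + X * (2 * ex 8 psi * ex 2 phip ^ 2 * ex 4 phim) := by
    have e1 : P * ex 4 phim ^ 4 * ex 8 phim = ex 4 phim * phip * ex 2 phip ^ 2 := by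
      have pm := P_main
      have : ex 4 phim ^ 4 = (phip * phim) * ex 2 phip ^ 2 := by
        rw [t1]; linear_combination (-(ex 4 phim ^ 2 + ex 2 phip * ex 2 phim)) * t1a
      rw [this]; linear_combination (phip * ex 2 phip ^ 2) * pm
    rw [e1]
    linear_combination ex 4 phim * ex 2 phip ^ 2 * t2 + ex 4 phim * ex 4 phip * t3 + (ex 4 phip ^ 2 + 4 * X ^ 2 * ex 8 psi ^ 2) * t1b
      + 4 * X ^ 2 * ex 8 phim * g
  have hv44 : ex 4 phim ^ 4 * ex 4 v ^ 4 = 1 := by rw [← mul_pow, hv4, one_pow]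
  refine ⟨ex 2 phim * phip ^ 2 * v ^ 4, 2 * ex 4 psi * phip ^ 2 * ex 2 phim * ex 4 v * ex 2 v ^ 4, - X ^ 2 * ex 16 J * w * ex 4 v ^ 4, ?_⟩
  simp only [map_mul, map_pow, map_ofNat, ex_ex 4 2 8 rfl, ex_ex 2 2 4 rfl, ex_ex 2 4 8 rfl]
  have k2 : P = (P * ex 4 phim ^ 4 * ex 8 phim) * ex 8 v * ex 4 v ^ 4 := by
    linear_combination (-P) * hv44 - P * ex 4 phim ^ 4 * ex 4 v ^ 4 * hv8
  rw [k2, key]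
  have k3 : ex 4 v ^ 4 * (1 + 8 * w) = 1 := by rw [← hw]; linear_combination hv44
  linear_combination (ex 8 phim * ex 4 phip ^ 2 * ex 4 v ^ 4 + 4 * X ^ 2 * ex 16 J * ex 4 v ^ 4) * hv8 + 4 * X ^ 2 * ex 16 J * k3

lemma coeff_J (n : ℕ) (h : ∀ j, n ≠ (j + 1).choose 2) : coeff n J = 0 := by
  have := ((WithPiTopology.hasSum_iff_hasSum_coeff ℤ).1 hJ) n
  refine this.unique ?_
  convert! hasSum_zero using 1
  ext1 j
  rw [coeff_mul_X_pow', ]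
  split_ifs with hj
  · have e : ((-1 : ℤ⟦X⟧) ^ j * (2 * (j : ℤ⟦X⟧) + 1)) = C ((-1) ^ j * (2 * (j : ℤ) + 1)) := by simp
    rw [e, coeff_C, if_neg]
    have := h j
    omega
  · rfl

lemma main (m : ℕ) (h : ∀ s, 8 * m + 1 ≠ s ^ 2) : 32 ∣ regularOverpartitions 4 8 (16 * m + 2) := by
  obtain ⟨U0, U1, U2, hU⟩ := P_struct
  have h1 := congrArg (coeff (16 * m + 2)) hU
  have e3 : coeff (16 * m + 2) (4 * X ^ 2 * ex 16 J) = 0 := by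
    rw [show (4 : ℤ⟦X⟧) * X ^ 2 * ex 16 J = C (4 : ℤ) * (ex 16 J * X ^ 2) by simp; ring, coeff_C_mul, coeff_mul_X_pow, coeff_ex, if_pos (by omega),
      Nat.mul_div_cancel_left _ (by norm_num), coeff_J, mul_zero]
    intro j hj
    apply h (2 * j + 1)
    have := tri j
    rw [← hj] at this
    linarith [this]
  have e1 : coeff (16 * m + 2) (ex 4 U0) = 0 := by
    rw [coeff_ex, if_neg (by omega)]
  have e2 : coeff (16 * m + 2) (X * ex 2 U1) = 0 := by
    rw [show 16 * m + 2 = (16 * m + 1) + 1 by rfl, coeff_succ_X_mul, coeff_ex, if_neg (by omega)]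
  have e4 : coeff (16 * m + 2) (32 * U2) = 32 * coeff (16 * m + 2) U2 := by
    rw [show (32 : ℤ⟦X⟧) * U2 = C (32 : ℤ) * U2 by simp, coeff_C_mul]
  rw [map_add, map_add, map_add, e1, e2, e3, e4, P, coeff_mk] at h1
  have : (32 : ℤ) ∣ (regularOverpartitions 4 8 (16 * m + 2) : ℤ) := ⟨coeff (16 * m + 2) U2, by rw [h1]; ring⟩
  exact_mod_cast this

end OP

theorem stmt_4 (n α β γ : ℕ) :
    32 ∣ regularOverpartitions 4 8
        (16 * 3 ^ (4 * α + 1) * 5 ^ (4 * β) * 7 ^ (4 * γ) * n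
          + 34 * 3 ^ (4 * α) * 5 ^ (4 * β) * 7 ^ (4 * γ)) := by
  obtain ⟨u, hu⟩ : ∃ u, u = 3 ^ α * 5 ^ β * 7 ^ γ := ⟨_, rfl⟩
  have hodd : u % 2 = 1 := by
    rw [hu]; apply Nat.odd_iff.1
    exact ((Odd.pow (by decide)).mul (Odd.pow (by decide))).mul (Odd.pow (by decide))
  have h8 : u ^ 4 % 8 = 1 := by
    have : u % 8 = 1 ∨ u % 8 = 3 ∨ u % 8 = 5 ∨ u % 8 = 7 := by omega
    rcases this with h | h | h | h <;> simp [Nat.pow_mod, h]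
  obtain ⟨t, ht⟩ : ∃ t, u ^ 4 = 8 * t + 1 := ⟨u ^ 4 / 8, by omega⟩
  have hm : u ^ 4 * (24 * n + 17) = 8 * (u ^ 4 * (3 * n + 2) + t) + 1 := by
    linear_combination ht
  have harg : 16 * 3 ^ (4 * α + 1) * 5 ^ (4 * β) * 7 ^ (4 * γ) * n
          + 34 * 3 ^ (4 * α) * 5 ^ (4 * β) * 7 ^ (4 * γ) = 16 * (u ^ 4 * (3 * n + 2) + t) + 2 := by
    have : u ^ 4 = 3 ^ (4 * α) * 5 ^ (4 * β) * 7 ^ (4 * γ) := by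
      rw [hu]; ring
    have h2 : 16 * (u ^ 4 * (3 * n + 2) + t) + 2 = 2 * (u ^ 4 * (24 * n + 17)) := by rw [hm]; ring
    rw [h2, this]; ring
  rw [harg]
  apply OP.main
  intro s hs
  rw [← hm] at hs
  have hd : (u ^ 2) ^ 2 ∣ s ^ 2 := ⟨24 * n + 17, by rw [← hs]; ring⟩
  rw [Nat.pow_dvd_pow_iff two_ne_zero] at hd
  obtain ⟨r, rfl⟩ := hd
  have hpos : 0 < u ^ 4 := by omega
  have hr : 24 * n + 17 = r ^ 2 := Nat.eq_of_mul_eq_mul_left hpos (by rw [hs]; ring)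
  have h3 : r ^ 2 % 3 = 2 := by omega
  have : r % 3 = 0 ∨ r % 3 = 1 ∨ r % 3 = 2 := by omega
  rcases this with h | h | h <;> simp [Nat.pow_mod, h] at h3
end

section
/- For all integers n ≥ 0, α ≥ 0, β ≥ 0, γ ≥ 0 and every j ∈ {1, 2, 3, 4}, the number of (4,8)-regular overpartitions satisfies p̄_{4,8}( 16 · 3^{4α} · 5^{4β+1} · 7^{4γ} · (5n + j) + 2 · 3^{4α} · 5^{4β+2} · 7^{4γ} ) ≡ 0 (mod 32). -/
open PowerSeries PowerSeries.WithPiTopology Filter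

noncomputable section RegOver

def fA (p : ℕ → Prop) [DecidablePred p] (i : ℕ) : ℤ⟦X⟧ := if p (i + 1) then 1 + X ^ (i + 1) else 1
def fB (p : ℕ → Prop) [DecidablePred p] (i : ℕ) : ℤ⟦X⟧ := if p (i + 1) then 1 - X ^ (i + 1) else 1

lemma hasProd_ev (f : ℕ → ℤ⟦X⟧) (hf : ∀ i, (X : ℤ⟦X⟧) ^ (i + 1) ∣ f i - 1) : Multipliable f := by
  have h := multipliable_one_add_of_tendsto_order_atTop_nhds_top (R := ℤ) (f := fun i => f i - 1) ?_
  · simpa using h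
  · refine ENat.tendsto_nhds_top_iff_natCast_lt.mpr (fun n ↦ Filter.eventually_atTop.mpr ⟨n, ?_⟩)
    intro m hm
    have := X_pow_dvd_iff.mp (hf m)
    have h2 : ((m + 1 : ℕ) : ℕ∞) ≤ (f m - 1).order := nat_le_order _ _ this
    refine lt_of_lt_of_le ?_ h2
    exact_mod_cast Nat.lt_succ_of_le hm

lemma multA (p : ℕ → Prop) [DecidablePred p] : Multipliable (fA p) := by
  apply hasProd_ev
  intro i
  unfold fA
  split_ifs <;> simp

lemma multB (p : ℕ → Prop) [DecidablePred p] : Multipliable (fB p) := by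
  apply hasProd_ev
  intro i
  unfold fB
  split_ifs <;> simp

def pA (p : ℕ → Prop) [DecidablePred p] : ℤ⟦X⟧ := ∏' i, fA p i
def pB (p : ℕ → Prop) [DecidablePred p] : ℤ⟦X⟧ := ∏' i, fB p i

lemma hasA (p : ℕ → Prop) [DecidablePred p] : HasProd (fA p) (pA p) := (multA p).hasProd
lemma hasB (p : ℕ → Prop) [DecidablePred p] : HasProd (fB p) (pB p) := (multB p).hasProd

lemma cc_prod (f : ℕ → ℤ⟦X⟧) (a : ℤ⟦X⟧) (h : HasProd f a) (hf : ∀ i, constantCoeff (f i) = 1) :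
    constantCoeff a = 1 := by
  have := h.map (constantCoeff (R := ℤ)) (continuous_constantCoeff ℤ)
  have h2 : (⇑(constantCoeff (R := ℤ)) ∘ f) = fun _ => 1 := by ext i; simp [hf]
  rw [h2] at this
  exact this.unique hasProd_one

lemma ne_zero_of_cc {a : ℤ⟦X⟧} (h : constantCoeff a = 1) : a ≠ 0 := by
  rintro rfl; simp at h

lemma ccA (p : ℕ → Prop) [DecidablePred p] : constantCoeff (pA p) = 1 := by
  apply cc_prod _ _ (hasA p); intro i; unfold fA; split_ifs <;> simp
lemma ccB (p : ℕ → Prop) [DecidablePred p] : constantCoeff (pB p) = 1 := by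
  apply cc_prod _ _ (hasB p); intro i; unfold fB; split_ifs <;> simp

def ovGF : ℤ⟦X⟧ := PowerSeries.mk fun n => (regularOverpartitions 4 8 n : ℤ)

def np (i : ℕ) : Prop := i % 8 ≠ 4
instance : DecidablePred np := fun i => by unfold np; infer_instance

lemma restr_mul (p : ℕ → Prop) [DecidablePred p] :
    (PowerSeries.mk fun n ↦ ((Nat.Partition.restricted n p).card : ℤ)) * pB p = 1 := by
  have h := (Nat.Partition.hasProd_powerSeriesMk_card_restricted ℤ p).mul (hasB p)
  refine h.unique ?_
  convert! hasProd_one using 1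
  ext1 i
  unfold fB
  split_ifs
  · simp_rw [pow_mul]
    rw [tsum_pow_mul_one_sub_of_constantCoeff_eq_zero (by simp)]
  · simp

lemma dist_eq (p : ℕ → Prop) [DecidablePred p] :
    (PowerSeries.mk fun n ↦ (((Nat.Partition.distincts n).filter
      (fun lam => ∀ i ∈ lam.parts, p i)).card : ℤ)) = pA p := by
  refine HasProd.unique ?_ (hasA p)
  convert! Nat.Partition.hasProd_genFun (fun i c ↦ if c < 2 ∧ p i then (1 : ℤ) else 0) using 1
  · ext1 i
    rw [tsum_eq_single 0]
    · unfold fA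
      by_cases h : p (i + 1)
      · rw [if_pos h, if_pos ⟨by norm_num, h⟩, zero_add, mul_one]
        congr 1; exact (one_smul ℤ _).symm
      · rw [if_neg h, if_neg (fun h' => h h'.2)]
        rw [left_eq_add]; exact zero_smul ℤ _
    · intro b hb
      rw [if_neg (by omega)]; exact zero_smul ℤ _
  · ext n
    simp only [coeff_mk, Nat.Partition.coeff_genFun]
    rw [← Nat.Partition.countRestricted_two, Nat.Partition.countRestricted, Finset.filter_filter,
      Finset.card_filter]
    push_cast
    refine Finset.sum_congr rfl fun x _ => ?_
    rw [Finsupp.prod, Finset.prod_boole]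
    congr 1
    simp
    grind

lemma ovGF_mul : ovGF * pB np = pA np := by
  have h : ovGF = pA np * (PowerSeries.mk fun n ↦ ((Nat.Partition.restricted n np).card : ℤ)) := by
    rw [← dist_eq]
    ext n
    rw [coeff_mul, Finset.Nat.sum_antidiagonal_eq_sum_range_succ_mk]
    simp only [ovGF, coeff_mk, regularOverpartitions, Nat.Partition.restricted, np]
    push_cast
    rfl
  rw [h, mul_assoc, restr_mul, mul_one]

lemma cont_of_coeff (f : ℤ⟦X⟧ →+* ℤ⟦X⟧)
    (h : ∀ n, ∃ m, ∃ c : ℤ, ∀ φ, coeff n (f φ) = c * coeff m φ) : Continuous f := by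
  rw [continuous_iff_continuousAt]
  intro x
  rw [ContinuousAt, tendsto_iff_coeff_tendsto]
  intro n
  obtain ⟨m, c, hc⟩ := h n
  simp only [hc]
  exact ((continuous_const.mul (continuous_coeff ℤ m)).tendsto x)

abbrev ex (d : ℕ) [NeZero d] (φ : ℤ⟦X⟧) : ℤ⟦X⟧ := expand d (NeZero.ne d) φ

lemma cont_ex (d : ℕ) [NeZero d] : Continuous (expand d (NeZero.ne d) : ℤ⟦X⟧ →ₐ[ℤ] ℤ⟦X⟧) := by
  apply cont_of_coeff (expand d (NeZero.ne d) : ℤ⟦X⟧ →ₐ[ℤ] ℤ⟦X⟧).toRingHom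
  intro n
  refine ⟨n / d, if d ∣ n then 1 else 0, fun φ => ?_⟩
  have := coeff_expand d (NeZero.ne d) φ (n := n)
  simp only [AlgHom.toRingHom_eq_coe, RingHom.coe_coe]
  rw [this]
  split_ifs <;> simp

lemma cont_neg : Continuous (evalNegHom : ℤ⟦X⟧ →+* ℤ⟦X⟧) := by
  apply cont_of_coeff
  intro n
  exact ⟨n, (-1) ^ n, fun φ => by simp [evalNegHom, coeff_rescale]⟩

lemma reidx (d : ℕ) [NeZero d] (f g : ℕ → ℤ⟦X⟧) (a : ℤ⟦X⟧)
    (h : HasProd (fun i => ex d (f i)) a)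
    (hg : ∀ i, g (d * (i + 1) - 1) = ex d (f i)) (hg1 : ∀ i, ¬ d ∣ i + 1 → g i = 1) :
    HasProd g a := by
  have hd : 0 < d := Nat.pos_of_neZero d
  have hinj : Function.Injective (fun i : ℕ => d * (i + 1) - 1) := by
    intro x y hxy
    have h1 : 1 ≤ d * (x + 1) := Nat.mul_pos hd (Nat.succ_pos _)
    have h2 : 1 ≤ d * (y + 1) := Nat.mul_pos hd (Nat.succ_pos _)
    have : d * (x + 1) = d * (y + 1) := by simp only at hxy; omega
    have := Nat.eq_of_mul_eq_mul_left hd this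
    omega
  rw [← hinj.hasProd_iff]
  · convert! h using 1
    ext1 i; simp [hg]
  · intro x hx
    apply hg1
    rintro ⟨k, hk⟩
    apply hx
    refine ⟨k - 1, ?_⟩
    have : k ≠ 0 := by rintro rfl; simp at hk
    have : k - 1 + 1 = k := by omega
    simp only [this, ← hk]
    simp

abbrev pT (_ : ℕ) : Prop := True

lemma exA (d : ℕ) [NeZero d] : pA (d ∣ ·) = ex d (pA pT) := by
  have h := (hasA pT).map (expand d (NeZero.ne d) : ℤ⟦X⟧ →ₐ[ℤ] ℤ⟦X⟧) (cont_ex d)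
  refine (hasA (d ∣ ·)).unique (reidx d (fA pT) _ _ h ?_ ?_)
  · intro i
    have h1 : 1 ≤ d * (i + 1) := Nat.mul_pos (Nat.pos_of_neZero d) (Nat.succ_pos _)
    simp [fA, ex, Nat.sub_add_cancel h1, pow_mul]
  · intro i hi; simp [fA, hi]

lemma exB (d : ℕ) [NeZero d] : pB (d ∣ ·) = ex d (pB pT) := by
  have h := (hasB pT).map (expand d (NeZero.ne d) : ℤ⟦X⟧ →ₐ[ℤ] ℤ⟦X⟧) (cont_ex d)
  refine (hasB (d ∣ ·)).unique (reidx d (fB pT) _ _ h ?_ ?_)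
  · intro i
    have h1 : 1 ≤ d * (i + 1) := Nat.mul_pos (Nat.pos_of_neZero d) (Nat.succ_pos _)
    simp [fB, ex, Nat.sub_add_cancel h1, pow_mul]
  · intro i hi; simp [fB, hi]

lemma relA : pA pT * ex 8 (pA pT) = pA np * ex 4 (pA pT) := by
  rw [← exA, ← exA]
  refine ((hasA _).mul (hasA _)).unique ?_
  convert! (hasA np).mul (hasA (4 ∣ ·)) using 1
  ext1 i
  change (if True then _ else _) * (if 8 ∣ i + 1 then _ else _)
    = (if (i + 1) % 8 ≠ 4 then _ else _) * (if 4 ∣ i + 1 then _ else _)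
  rw [if_pos trivial]
  by_cases h8 : 8 ∣ i + 1
  · rw [if_pos h8, if_pos (by omega), if_pos (by omega)]
  · by_cases h4 : 4 ∣ i + 1
    · rw [if_neg h8, if_neg (by omega), if_pos h4, mul_comm]
    · rw [if_neg h8, if_pos (by omega), if_neg h4]

lemma relB : pB pT * ex 8 (pB pT) = pB np * ex 4 (pB pT) := by
  rw [← exB, ← exB]
  refine ((hasB _).mul (hasB _)).unique ?_
  convert! (hasB np).mul (hasB (4 ∣ ·)) using 1
  ext1 i
  change (if True then _ else _) * (if 8 ∣ i + 1 then _ else _)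
    = (if (i + 1) % 8 ≠ 4 then _ else _) * (if 4 ∣ i + 1 then _ else _)
  rw [if_pos trivial]
  by_cases h8 : 8 ∣ i + 1
  · rw [if_pos h8, if_pos (by omega), if_pos (by omega)]
  · by_cases h4 : 4 ∣ i + 1
    · rw [if_neg h8, if_neg (by omega), if_pos h4, mul_comm]
    · rw [if_neg h8, if_pos (by omega), if_neg h4]

lemma relNeg : pB pT * evalNegHom (pB pT) * (ex 2 (pA pT)) ^ 2
    = pA pT * evalNegHom (pA pT) * (ex 2 (pB pT)) ^ 2 := by
  rw [← exA, ← exB, pow_two, pow_two]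
  have h1 := ((hasB pT).mul ((hasB pT).map evalNegHom cont_neg)).mul
    ((hasA (2 ∣ ·)).mul (hasA (2 ∣ ·)))
  have h2 := ((hasA pT).mul ((hasA pT).map evalNegHom cont_neg)).mul
    ((hasB (2 ∣ ·)).mul (hasB (2 ∣ ·)))
  refine h1.unique ?_
  refine Eq.mp (congrArg (fun f => HasProd f _) ?_) h2
  ext1 i
  have e1 : fA pT i = 1 + X ^ (i + 1) := if_pos trivial
  have e2 : fB pT i = 1 - X ^ (i + 1) := if_pos trivial
  simp only [Function.comp, e1, e2, map_add, map_sub, map_one, map_pow, evalNegHom_X]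
  by_cases h : 2 ∣ i + 1
  · have e3 : fA (2 ∣ ·) i = 1 + X ^ (i + 1) := if_pos h
    have e4 : fB (2 ∣ ·) i = 1 - X ^ (i + 1) := if_pos h
    rw [e3, e4, Even.neg_pow (even_iff_two_dvd.mpr h)]; ring
  · have e3 : fA (2 ∣ ·) i = 1 := if_neg h
    have e4 : fB (2 ∣ ·) i = 1 := if_neg h
    rw [e3, e4, Odd.neg_pow (by rwa [← Nat.not_even_iff_odd, even_iff_two_dvd])]; ring

lemma gauss_tel {R : Type*} [CommRing R] (q : R) (u : ℕ → R)
    (hu : ∀ s, u (s + 1) * (1 - q ^ (s + 1)) = u s * (1 + q ^ s)) (N k : ℕ) :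
    ∑ s ∈ Finset.range k, (-1) ^ s * u s * (q ^ (s * (N + 1)) * (1 - q ^ N) - q ^ (s * N) * (1 + q ^ N))
      = (-1) ^ k * (u k * (1 - q ^ k)) * q ^ (k * N) := by
  induction k with
  | zero => simp
  | succ k ih =>
    rw [Finset.sum_range_succ, ih, hu]
    ring

lemma gauss_fin {R : Type*} [CommRing R] (q : R) (u v : ℕ → R)
    (hu0 : u 0 = 1) (hv0 : v 0 = 1)
    (hu : ∀ s, u (s + 1) * (1 - q ^ (s + 1)) = u s * (1 + q ^ s))
    (hv : ∀ s, v (s + 1) * (1 + q ^ (s + 1)) = v s * (1 - q ^ (s + 1)))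
    (hun : ∀ s : ℕ, IsUnit (1 + q ^ (s + 1))) (n : ℕ) :
    1 + ∑ j ∈ Finset.range n, 2 * (-1) ^ (j + 1) * q ^ ((j + 1) ^ 2)
      = v n * ∑ s ∈ Finset.range (n + 1), (-1) ^ s * u s * q ^ (s * (n + 1)) := by
  have huv : ∀ n, u n * (1 + q ^ n) * v n = 2 := by
    intro n
    induction n with
    | zero => simp [hu0, hv0]; norm_num
    | succ n ih =>
      calc u (n + 1) * (1 + q ^ (n + 1)) * v (n + 1)
          = u (n + 1) * (v (n + 1) * (1 + q ^ (n + 1))) := by ring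
        _ = (u (n + 1) * (1 - q ^ (n + 1))) * v n := by rw [hv]; ring
        _ = 2 := by rw [hu, ih]
  induction n with
  | zero => simp [hu0, hv0]
  | succ n ih =>
    rw [Finset.sum_range_succ, ← add_assoc, ih]
    apply (hun n).mul_right_cancel
    have ht := gauss_tel q u hu (n + 1) (n + 1)
    have h1 : (1 - q ^ (n + 1)) * (∑ s ∈ Finset.range (n + 1), (-1) ^ s * u s * q ^ (s * (n + 1 + 1)))
      = (1 + q ^ (n + 1)) * (∑ s ∈ Finset.range (n + 1), (-1) ^ s * u s * q ^ (s * (n + 1)))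
        + (-1) ^ (n + 1) * (u (n + 1) * (1 - q ^ (n + 1))) * q ^ ((n + 1) * (n + 1)) := by
      rw [← ht, Finset.mul_sum, Finset.mul_sum, ← Finset.sum_add_distrib]
      refine Finset.sum_congr rfl fun s _ => ?_
      ring
    rw [Finset.sum_range_succ _ (n + 1)]
    have h2 : u (n + 1) * (1 - q ^ (n + 1)) * v n = 2 := by rw [hu, huv]
    set S1 := ∑ s ∈ Finset.range (n + 1), (-1) ^ s * u s * q ^ (s * (n + 1 + 1))
    set S0 := ∑ s ∈ Finset.range (n + 1), (-1) ^ s * u s * q ^ (s * (n + 1))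
    have h3 : v (n + 1) * (S1 + (-1) ^ (n + 1) * u (n + 1) * q ^ ((n + 1) * (n + 1 + 1))) * (1 + q ^ (n + 1))
       = v n * ((1 - q ^ (n + 1)) * S1 + (-1) ^ (n + 1) * (u (n + 1) * (1 - q ^ (n + 1))) * q ^ ((n + 1) * (n + 1 + 1))) := by
      linear_combination (S1 + (-1) ^ (n + 1) * u (n + 1) * q ^ ((n + 1) * (n + 1 + 1))) * hv n
    rw [h3, h1]
    have e : q ^ ((n + 1) * (n + 1 + 1)) = q ^ ((n + 1) ^ 2) * q ^ (n + 1) := by ring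
    have e' : q ^ ((n + 1) * (n + 1)) = q ^ ((n + 1) ^ 2) := by ring
    rw [e, e']
    linear_combination (-(-1) ^ (n + 1) * q ^ ((n + 1) ^ 2) * (1 + q ^ (n + 1))) * h2

def cP (n : ℕ) : ℤ := if n = 0 then 1 else if IsSquare n then 2 else 0
def phi : ℤ⟦X⟧ := PowerSeries.mk cP
def phim : ℤ⟦X⟧ := PowerSeries.mk fun n => (-1) ^ n * cP n

def Sn (n : ℕ) : ℤ⟦X⟧ := 1 + ∑ j ∈ Finset.range n, 2 * (-1) ^ (j + 1) * X ^ ((j + 1) ^ 2)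

lemma coeff_Sn (m n : ℕ) (h : m ≤ n) : coeff m (Sn n) = coeff m phim := by
  have hc : ∀ j, coeff m (2 * (-1) ^ (j + 1) * X ^ ((j + 1) ^ 2) : ℤ⟦X⟧)
      = if m = (j + 1) ^ 2 then 2 * (-1) ^ (j + 1) else 0 := by
    intro j
    have : (2 * (-1) ^ (j + 1) : ℤ⟦X⟧) = C (2 * (-1) ^ (j + 1)) := by simp
    rw [this, coeff_C_mul, coeff_X_pow]
    split_ifs <;> simp
  simp only [Sn, phim, coeff_mk, map_add, map_sum, hc, coeff_one, cP]
  by_cases h0 : m = 0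
  · subst h0
    rw [Finset.sum_eq_zero]
    · simp
    · intro x _; rw [if_neg]; positivity
  · simp only [h0, if_false, zero_add]
    split_ifs with hs
    · obtain ⟨r, rfl⟩ := hs
      have hr : r ≠ 0 := by rintro rfl; simp at h0
      obtain ⟨r, rfl⟩ := Nat.exists_eq_succ_of_ne_zero hr
      rw [Finset.sum_eq_single r]
      · rw [if_pos (by simp [pow_two])]
        rw [pow_mul]
        rcases Nat.even_or_odd (r + 1) with h | h <;> simp [h.neg_one_pow] 
      · intro b _ hb
        rw [if_neg]
        intro hh
        rw [← pow_two] at hh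
        have := Nat.pow_left_injective (n := 2) (by norm_num) hh
        simp at this; omega
      · intro hr
        exfalso; apply hr
        simp only [Finset.mem_range]; simp only [Nat.succ_eq_add_one] at h; nlinarith
    · rw [Finset.sum_eq_zero]
      · simp
      · intro x _; rw [if_neg]; rintro rfl; exact hs ⟨x + 1, by ring⟩

lemma tendsto_Sn : Tendsto Sn atTop (nhds phim) := by
  rw [tendsto_iff_coeff_tendsto]
  intro d
  apply tendsto_const_nhds.congr'
  filter_upwards [eventually_ge_atTop d] with n hn
  rw [coeff_Sn d n hn]

lemma unit_of_cc {a : ℤ⟦X⟧} (h : constantCoeff a = 1) : IsUnit a := by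
  rw [isUnit_iff_constantCoeff, h]; exact isUnit_one

def uu (s : ℕ) : ℤ⟦X⟧ := ∏ i ∈ Finset.range s, (1 + X ^ i) * Ring.inverse (1 - X ^ (i + 1))
def vv (s : ℕ) : ℤ⟦X⟧ := ∏ i ∈ Finset.range s, (1 - X ^ (i + 1)) * Ring.inverse (1 + X ^ (i + 1))

lemma gauss : pA pT * phim = pB pT := by
  have hA : ∀ s : ℕ, IsUnit (1 + X ^ (s + 1) : ℤ⟦X⟧) := fun s => unit_of_cc (by simp)
  have hB : ∀ s : ℕ, IsUnit (1 - X ^ (s + 1) : ℤ⟦X⟧) := fun s => unit_of_cc (by simp)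
  have hfin := gauss_fin (X : ℤ⟦X⟧) uu vv (by simp [uu]) (by simp [vv])
    (fun s => by
      rw [uu, Finset.prod_range_succ, ← uu]
      linear_combination (uu s * (1 + X ^ s)) * Ring.inverse_mul_cancel _ (hB s))
    (fun s => by
      rw [vv, Finset.prod_range_succ, ← vv]
      linear_combination (vv s * (1 - X ^ (s + 1))) * Ring.inverse_mul_cancel _ (hA s)) hA
  have hAv : ∀ n, (∏ i ∈ Finset.range n, fA pT i) * vv n = ∏ i ∈ Finset.range n, fB pT i := by
    intro n
    rw [vv, ← Finset.prod_mul_distrib]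
    refine Finset.prod_congr rfl fun i _ => ?_
    have e1 : fA pT i = 1 + X ^ (i + 1) := if_pos trivial
    have e2 : fB pT i = 1 - X ^ (i + 1) := if_pos trivial
    rw [e1, e2]
    linear_combination (1 - X ^ (i + 1)) * Ring.inverse_mul_cancel _ (hA i)
  have t1 : Tendsto (fun n => (∏ i ∈ Finset.range n, fA pT i) * Sn n) atTop (nhds (pA pT * phim)) :=
    (hasA pT).tendsto_prod_nat.mul tendsto_Sn
  refine tendsto_nhds_unique t1 ?_
  have t2 := (hasB pT).tendsto_prod_nat
  rw [tendsto_iff_coeff_tendsto] at t2 ⊢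
  intro d
  refine (t2 d).congr' ?_
  filter_upwards [eventually_ge_atTop d] with n hn
  have : ∃ K : ℤ⟦X⟧, Sn n = vv n * (1 + X ^ (n + 1) * K) := by
    refine ⟨∑ s ∈ Finset.range n, (-1) ^ (s + 1) * uu (s + 1) * X ^ (s * (n + 1)), ?_⟩
    rw [Sn, hfin n, Finset.sum_range_succ', Finset.mul_sum, add_comm]
    congr 2
    · simp [uu]
    · refine Finset.sum_congr rfl fun s _ => ?_
      ring
  obtain ⟨K, hK⟩ := this
  rw [hK, ← mul_assoc, hAv, mul_add, mul_one, map_add, mul_left_comm, coeff_X_pow_mul']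
  rw [if_neg (by omega), add_zero]

lemma ex_mul (d : ℕ) [NeZero d] (a b : ℤ⟦X⟧) : ex d (a * b) = ex d a * ex d b := map_mul _ _ _
lemma ex_add (d : ℕ) [NeZero d] (a b : ℤ⟦X⟧) : ex d (a + b) = ex d a + ex d b := map_add _ _ _
lemma ex_pow (d : ℕ) [NeZero d] (a : ℤ⟦X⟧) (n : ℕ) : ex d (a ^ n) = ex d a ^ n := map_pow _ _ _
lemma ex_ex (d e f : ℕ) [NeZero d] [NeZero e] [NeZero f] (h : d * e = f) (a : ℤ⟦X⟧) :
    ex d (ex e a) = ex f a := by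
  subst h; exact (expand_mul d (NeZero.ne d) e (NeZero.ne e) a).symm
lemma cc_ex (d : ℕ) [NeZero d] (a : ℤ⟦X⟧) : constantCoeff (ex d a) = constantCoeff a :=
  constantCoeff_expand _ _ _

lemma cc_phim : constantCoeff phim = 1 := by
  rw [← coeff_zero_eq_constantCoeff_apply]; simp [phim, cP]

lemma neg_phim : evalNegHom phim = phi := by
  ext n
  simp only [evalNegHom, coeff_rescale, phim, phi, coeff_mk]
  rw [← mul_assoc, ← mul_pow]; simp

lemma main1 : ovGF * phim * ex 8 phim = ex 4 phim := by
  have g4 : ex 4 (pA pT) * ex 4 phim = ex 4 (pB pT) := by rw [← ex_mul, gauss]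
  have g8 : ex 8 (pA pT) * ex 8 phim = ex 8 (pB pT) := by rw [← ex_mul, gauss]
  have h0 : pA pT * ex 8 (pA pT) ≠ 0 :=
    mul_ne_zero (ne_zero_of_cc (ccA _)) (ne_zero_of_cc (by rw [cc_ex, ccA]))
  apply mul_left_cancel₀ h0
  calc pA pT * ex 8 (pA pT) * (ovGF * phim * ex 8 phim)
      = ovGF * ((pA pT * phim) * (ex 8 (pA pT) * ex 8 phim)) := by ring
    _ = (ovGF * pB np) * ex 4 (pB pT) := by rw [gauss, g8, relB, mul_assoc]
    _ = (pA np * ex 4 (pA pT)) * ex 4 phim := by rw [ovGF_mul, ← g4, mul_assoc]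
    _ = _ := by rw [← relA]

lemma main2 : phi * phim = (ex 2 phim) ^ 2 := by
  have g2 : ex 2 (pA pT) * ex 2 phim = ex 2 (pB pT) := by rw [← ex_mul, gauss]
  have gn : evalNegHom (pA pT) * phi = evalNegHom (pB pT) := by
    rw [← neg_phim, ← map_mul, gauss]
  have ccn : constantCoeff (evalNegHom (pA pT)) = 1 := by
    rw [← coeff_zero_eq_constantCoeff_apply, evalNegHom, coeff_rescale]
    simp [ccA]
  have h0 : pA pT * evalNegHom (pA pT) * (ex 2 (pA pT)) ^ 2 ≠ 0 :=
    mul_ne_zero (mul_ne_zero (ne_zero_of_cc (ccA _)) (ne_zero_of_cc ccn))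
      (pow_ne_zero _ (ne_zero_of_cc (by rw [cc_ex, ccA])))
  apply mul_left_cancel₀ h0
  have := relNeg
  rw [← g2, ← gn, ← gauss] at this
  linear_combination this

lemma main3 : ovGF * (ex 8 phim) ^ 7 = phi * (ex 2 phi) ^ 2 * (ex 4 phi) ^ 3 := by
  have h2 : ex 2 phi * ex 2 phim = (ex 4 phim) ^ 2 := by
    rw [← ex_mul, main2, ex_pow, ex_ex 2 2 4 rfl]
  have h4 : ex 4 phi * ex 4 phim = (ex 8 phim) ^ 2 := by
    rw [← ex_mul, main2, ex_pow, ex_ex 4 2 8 rfl]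
  have h1 := main2
  have h0 := main1
  have n4 : ex 4 phim ≠ 0 := ne_zero_of_cc (by rw [cc_ex, cc_phim])
  apply mul_left_cancel₀ n4
  generalize ex 8 phim = a8 at *
  generalize ex 4 phim = a4 at *
  generalize ex 2 phim = a2 at *
  generalize ex 4 phi = b4 at *
  generalize ex 2 phi = b2 at *
  have e1 : ovGF * a2 ^ 2 * a8 = phi * a4 := by rw [← h1]; linear_combination phi * h0
  have e2 : ovGF * a4 ^ 4 * a8 = phi * b2 ^ 2 * a4 := by
    have : a4 ^ 4 = b2 ^ 2 * a2 ^ 2 := by linear_combination (-(a4 ^ 2) - b2 * a2) * h2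
    rw [this]; linear_combination b2 ^ 2 * e1
  have e3 : a8 ^ 7 = b4 ^ 3 * a4 ^ 3 * a8 := by
    have : a8 ^ 7 = (a8 ^ 2) ^ 3 * a8 := by ring
    rw [this, ← h4]; ring
  rw [e3]
  linear_combination b4 ^ 3 * e2

lemma pow16 (b : ℤ⟦X⟧) : ∃ K, (1 + 2 * b) ^ 16 = 1 + 32 * K := by
  refine ⟨?_, ?_⟩
  rotate_left
  · have e1 : (1 + 2 * b) ^ 2 = 1 + 4 * (b + b ^ 2) := by ring
    have e2 : ∀ c : ℤ⟦X⟧, (1 + 4 * c) ^ 2 = 1 + 8 * (c + 2 * c ^ 2) := by intro c; ring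
    have e3 : ∀ c : ℤ⟦X⟧, (1 + 8 * c) ^ 2 = 1 + 16 * (c + 4 * c ^ 2) := by intro c; ring
    have e4 : ∀ c : ℤ⟦X⟧, (1 + 16 * c) ^ 2 = 1 + 32 * (c + 8 * c ^ 2) := by intro c; ring
    have : (1 + 2 * b) ^ 16 = ((((1 + 2 * b) ^ 2) ^ 2) ^ 2) ^ 2 := by ring
    rw [this, e1, e2, e3, e4]

lemma pow4 (b : ℤ⟦X⟧) : ∃ K, (1 + 2 * b) ^ 4 = 1 + 8 * K := by
  refine ⟨b + b ^ 2 + 2 * (b + b ^ 2) ^ 2, ?_⟩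
  ring

def sA : ℤ⟦X⟧ := PowerSeries.mk fun n => if n ≠ 0 ∧ IsSquare n then 1 else 0
def sB : ℤ⟦X⟧ := PowerSeries.mk fun n => if n ≠ 0 ∧ IsSquare n then (-1) ^ n else 0
def psi : ℤ⟦X⟧ := PowerSeries.mk fun n => if IsSquare (8 * n + 1) then 1 else 0

lemma two_eq : (2 : ℤ⟦X⟧) = C 2 := by simp

lemma phi_eq : phi = 1 + 2 * sA := by
  ext n
  rw [two_eq, map_add, coeff_C_mul, coeff_one]
  simp only [phi, sA, coeff_mk, cP]
  split_ifs <;> simp_all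

lemma phim_eq : phim = 1 + 2 * sB := by
  ext n
  rw [two_eq, map_add, coeff_C_mul, coeff_one]
  simp only [phim, sB, coeff_mk, cP]
  split_ifs <;> simp_all
  ring

lemma ex_phi (d : ℕ) [NeZero d] : ex d phi = 1 + 2 * ex d sA := by
  rw [phi_eq]; simp only [ex, map_add, map_mul, map_one, map_ofNat]
lemma ex_phim (d : ℕ) [NeZero d] : ex d phim = 1 + 2 * ex d sB := by
  rw [phim_eq]; simp only [ex, map_add, map_mul, map_one, map_ofNat]

lemma coeff_ex (d : ℕ) [NeZero d] (a : ℤ⟦X⟧) (n : ℕ) :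
    coeff n (ex d a) = if d ∣ n then coeff (n / d) a else 0 := coeff_expand _ _ _

lemma phi_split : phi = ex 4 phi + 2 * X * ex 8 psi := by
  ext n
  rw [two_eq, mul_assoc, map_add, coeff_C_mul, coeff_ex]
  rcases n with _ | n
  · simp [phi, cP]
  · rw [coeff_succ_X_mul, coeff_ex]
    simp only [phi, psi, coeff_mk, cP]
    by_cases h4 : 4 ∣ n + 1
    · obtain ⟨k, hk⟩ := h4
      have h8 : ¬ 8 ∣ n := by omega
      rw [hk]
      have : IsSquare (4 * k) ↔ IsSquare k := by
        constructor
        · rintro ⟨r, hr⟩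
          have : 2 ∣ r := by
            have : Even (r * r) := ⟨2 * k, by omega⟩
            rcases Nat.even_mul.mp this with h | h <;> exact h.two_dvd
          obtain ⟨t, rfl⟩ := this
          exact ⟨t, by nlinarith⟩
        · rintro ⟨r, rfl⟩
          exact ⟨2 * r, by ring⟩
      simp [h8, this]
    · rw [if_neg h4]
      have hmod : IsSquare (n + 1) → 8 ∣ n := by
        rintro ⟨r, hr⟩
        have h2 : r % 8 = 0 ∨ r % 8 = 1 ∨ r % 8 = 2 ∨ r % 8 = 3 ∨ r % 8 = 4 ∨ r % 8 = 5 ∨ r % 8 = 6 ∨ r % 8 = 7 := by omega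
        have h3 : (n + 1) % 8 = ((r % 8) * (r % 8)) % 8 := by rw [hr, Nat.mul_mod]
        rcases h2 with h | h | h | h | h | h | h | h <;> rw [h] at h3 <;> omega
      by_cases h8 : 8 ∣ n
      · rw [if_pos h8, Nat.mul_div_cancel' h8]
        simp
      · rw [if_neg h8, if_neg (by omega), if_neg (fun h => h8 (hmod h))]
        simp

lemma two_mul_of_dvd (f g : ℤ⟦X⟧) (h : ∀ n, (2 : ℤ) ∣ coeff n f - coeff n g) :
    ∃ K, f = g + 2 * K := by
  refine ⟨PowerSeries.mk fun n => (coeff n f - coeff n g) / 2, ?_⟩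
  ext n
  rw [two_eq, map_add, coeff_C_mul, coeff_mk, Int.mul_ediv_cancel' (h n)]
  ring

lemma sB_eq : ∃ K, sB = sA + 2 * K := by
  apply two_mul_of_dvd
  intro n
  simp only [sA, sB, coeff_mk]
  split_ifs
  · rcases Nat.even_or_odd n with h | h <;> simp [h.neg_one_pow]
  · simp

lemma sq_eq (f : ℤ⟦X⟧) : ∃ K, f ^ 2 = ex 2 f + 2 * K := by
  apply two_mul_of_dvd
  intro n
  have h : (PowerSeries.map (Int.castRingHom (ZMod 2))) (f ^ 2)
      = (PowerSeries.map (Int.castRingHom (ZMod 2))) (ex 2 f) := by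
    rw [map_pow, ex, PowerSeries.map_expand]
    have := MvPowerSeries.map_frobenius_expand 2 (NeZero.ne 2)
      (f := (PowerSeries.map (Int.castRingHom (ZMod 2)) f : MvPowerSeries Unit (ZMod 2)))
    rw [ZMod.frobenius_zmod] at this
    rw [MvPowerSeries.map_id] at this
    exact this.symm
  have h2 := congrArg (coeff n) h
  rw [coeff_map, coeff_map] at h2
  have := (ZMod.intCast_eq_intCast_iff_dvd_sub _ _ 2).mp h2.symm
  exact_mod_cast this

lemma phim_sq : ∃ K, phim ^ 2 = 1 + 4 * (sA + ex 2 sA) + 8 * K := by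
  obtain ⟨K1, h1⟩ := sB_eq
  obtain ⟨K2, h2⟩ := sq_eq sA
  refine ⟨K1 + K2 + 2 * sA * K1 + 2 * K1 ^ 2, ?_⟩
  rw [phim_eq, h1]
  linear_combination 4 * h2

lemma ext1 : ∃ L, ovGF = ex 2 (ex 2 phi * (phi ^ 2 * (ex 2 phi) ^ 3 * (ex 4 phim) ^ 9))
    + X * ex 2 (2 * ex 4 psi * (phi ^ 2 * (ex 2 phi) ^ 3 * (ex 4 phim) ^ 9)) + 32 * L := by
  obtain ⟨K, hK⟩ := pow16 (ex 8 sB)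
  rw [← ex_phim] at hK
  refine ⟨- (ovGF * K), ?_⟩
  have h3 := main3
  have hs := phi_split
  simp only [ex_mul, ex_pow, ex_ex 2 2 4 rfl, ex_ex 2 4 8 rfl]
  have e2 : ex 2 2 = (2 : ℤ⟦X⟧) := by simp only [ex, map_ofNat]
  rw [e2]
  generalize ex 8 phim = a8 at *
  generalize ex 2 phi = b2 at *
  generalize ex 4 phi = b4 at *
  generalize ex 8 psi = p8 at *
  linear_combination (-ovGF) * hK + a8 ^ 9 * h3 + (b2 ^ 2 * b4 ^ 3 * a8 ^ 9) * hs

lemma ext2 : ∃ Z L, ex 2 phi * (phi ^ 2 * (ex 2 phi) ^ 3 * (ex 4 phim) ^ 9)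
    = ex 2 Z + 4 * (X * ex 8 (psi * (1 + 4 * (sA + ex 2 sA)))) + 32 * L := by
  obtain ⟨K1, h1⟩ := pow4 (ex 2 sA)
  rw [← ex_phi] at h1
  obtain ⟨K2, h2⟩ := pow4 (ex 4 sB)
  rw [← ex_phim] at h2
  obtain ⟨K3, h3⟩ := phim_sq
  have h4 : ex 4 phi * ex 4 phim = ex 8 (phim ^ 2) := by
    rw [← ex_mul, main2, ex_pow, ex_ex 4 2 8 rfl, ex_pow]
  have h5 : ex 8 (phim ^ 2) = ex 8 (1 + 4 * (sA + ex 2 sA)) + 8 * ex 8 K3 := by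
    rw [h3]; simp only [ex, map_add, map_mul, map_one, map_ofNat]
  rw [h5] at h4
  rw [ex_mul]
  have hs := phi_split
  generalize hW : ex 8 (1 + 4 * (sA + ex 2 sA)) = W at *
  generalize ex 8 K3 = K4 at *
  obtain ⟨K5, hK5⟩ : ∃ K, (ex 2 phi) ^ 4 * (ex 4 phim) ^ 8 = 1 + 8 * K := by
    refine ⟨K1 * (1 + 8 * K2) ^ 2 + 2 * K2 + 8 * K2 ^ 2, ?_⟩
    have : (ex 4 phim) ^ 8 = ((ex 4 phim) ^ 4) ^ 2 := by ring
    rw [this, h1, h2]; ring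
  refine ⟨((ex 2 phi) ^ 2 + 4 * X * (ex 4 psi) ^ 2) * phi ^ 4 * (ex 2 phim) ^ 9,
    X * ex 8 psi * (K4 + (W + 8 * K4) * K5), ?_⟩
  have e2 : ex 2 4 = (4 : ℤ⟦X⟧) := by simp only [ex, map_ofNat]
  have eX : ex 2 X = (X : ℤ⟦X⟧) ^ 2 := by simp only [ex, expand_X]
  simp only [ex_mul, ex_add, ex_pow, ex_ex 2 2 4 rfl, ex_ex 2 4 8 rfl, e2, eX]
  have key : phi ^ 2 = (ex 4 phi) ^ 2 + 4 * X ^ 2 * (ex 8 psi) ^ 2 + 4 * X * ex 4 phi * ex 8 psi := by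
    conv_lhs => rw [hs]
    ring
  rw [key]
  generalize ex 8 psi = p8 at *
  generalize ex 4 phim = m4 at *
  generalize ex 2 phi = b2 at *
  generalize ex 4 phi = b4 at *
  linear_combination (4 * X * p8 * b4 * m4) * hK5 + (4 * X * p8 * (1 + 8 * K5)) * h4

lemma n_eq (k : ℕ) [k.AtLeastTwo] : (OfNat.ofNat k : ℤ⟦X⟧) = C (OfNat.ofNat k : ℤ) := by simp

lemma coeff_even (M : ℕ) (hM : M % 2 = 1) : ∃ c : ℤ, (regularOverpartitions 4 8 (2 * M) : ℤ)
    = coeff M (ex 2 phi * (phi ^ 2 * (ex 2 phi) ^ 3 * (ex 4 phim) ^ 9)) + 32 * c := by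
  obtain ⟨L, hL⟩ := ext1
  refine ⟨coeff (2 * M) L, ?_⟩
  have h := congrArg (coeff (2 * M)) hL
  rw [n_eq 32, map_add, map_add, coeff_C_mul, coeff_ex] at h
  obtain ⟨k, rfl⟩ : ∃ k, M = k + 1 := ⟨M - 1, by omega⟩
  have e : 2 * (k + 1) = (2 * k + 1) + 1 := by ring
  have h2 : coeff (2 * (k + 1)) (X * ex 2 (2 * ex 4 psi * (phi ^ 2 * (ex 2 phi) ^ 3 * (ex 4 phim) ^ 9)) : ℤ⟦X⟧) = 0 := by
    rw [e, coeff_succ_X_mul, coeff_ex, if_neg (by omega)]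
  rw [h2, if_pos (by simp)] at h
  simp only [ovGF, coeff_mk] at h
  rw [h]
  simp

lemma coeff_final (l : ℕ) : ∃ c : ℤ, (regularOverpartitions 4 8 (2 * (8 * l + 1)) : ℤ)
    = 4 * (coeff l psi + 4 * (coeff l (psi * sA) + coeff l (psi * ex 2 sA))) + 32 * c := by
  obtain ⟨c, hc⟩ := coeff_even (8 * l + 1) (by omega)
  obtain ⟨Z, L, hL⟩ := ext2
  refine ⟨c + coeff (8 * l + 1) L, ?_⟩
  rw [hc, hL, n_eq 32, n_eq 4, map_add, map_add, coeff_C_mul, coeff_C_mul, coeff_ex, coeff_succ_X_mul,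
    coeff_ex, if_neg (by omega), if_pos (by simp), Nat.mul_div_cancel_left _ (by norm_num), mul_add,
    mul_one, mul_left_comm, map_add, coeff_C_mul, mul_add psi, map_add]
  ring

lemma no_form (k : ℕ) : ∀ (m x y : ℕ), ¬ 5 ∣ m → x ^ 2 + 2 * y ^ 2 ≠ 5 ^ (2 * k + 1) * m := by
  have key : ∀ x y : ℕ, 5 ∣ x ^ 2 + 2 * y ^ 2 → 5 ∣ x ∧ 5 ∣ y := by
    intro x y h
    have h1 : (x ^ 2 + 2 * y ^ 2) % 5 = ((x % 5) ^ 2 + 2 * (y % 5) ^ 2) % 5 := by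
      simp [Nat.add_mod, Nat.mul_mod, Nat.pow_mod]
    have hx : x % 5 < 5 := Nat.mod_lt _ (by norm_num)
    have hy : y % 5 < 5 := Nat.mod_lt _ (by norm_num)
    rw [Nat.dvd_iff_mod_eq_zero, h1] at h
    rw [Nat.dvd_iff_mod_eq_zero, Nat.dvd_iff_mod_eq_zero]
    generalize x % 5 = a at *
    generalize y % 5 = b at *
    interval_cases a <;> interval_cases b <;> simp_all
  induction k with
  | zero =>
    intro m x y hm h
    obtain ⟨⟨a, rfl⟩, ⟨b, rfl⟩⟩ := key x y (by rw [h]; simp)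
    apply hm
    exact ⟨a ^ 2 + 2 * b ^ 2, by ring_nf at h ⊢; omega⟩
  | succ k ih =>
    intro m x y hm h
    obtain ⟨⟨a, rfl⟩, ⟨b, rfl⟩⟩ := key x y (by rw [h]; exact ⟨5 ^ (2 * k + 2) * m, by ring⟩)
    apply ih m a b hm
    have : 5 ^ (2 * (k + 1) + 1) * m = 25 * (5 ^ (2 * k + 1) * m) := by ring
    rw [this] at h
    generalize 5 ^ (2 * k + 1) * m = t at *
    nlinarith

lemma card_invol {α : Type*} [DecidableEq α] (s : Finset α) (g : α → α) (hg : ∀ a ∈ s, g a ∈ s)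
    (hgg : ∀ a ∈ s, g (g a) = a) : s.card % 2 = (s.filter (fun a => g a = a)).card % 2 := by
  have h : ∑ _a ∈ s.filter (fun a => ¬ g a = a), (1 : ZMod 2) = 0 := by
    refine Finset.sum_involution (fun a _ => g a) ?_ ?_ ?_ ?_
    · intro a _; decide
    · intro a ha _; exact (Finset.mem_filter.mp ha).2
    · intro a ha
      have ha := Finset.mem_filter.mp ha
      refine Finset.mem_filter.mpr ⟨hg a ha.1, ?_⟩
      rw [hgg a ha.1]; exact fun h => ha.2 h.symm
    · intro a ha; exact hgg a (Finset.mem_filter.mp ha).1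
  rw [Finset.sum_const, nsmul_one, ZMod.natCast_eq_zero_iff] at h
  have := Finset.card_filter_add_card_filter_not (s := s) (fun a => g a = a)
  omega

def zS (M : ℕ) : Finset (ℕ × ℕ × ℕ) :=
  ((Finset.range (M + 1)) ×ˢ (Finset.range (M + 1)) ×ˢ (Finset.range (M + 1))).filter
    fun t => 0 < t.2.1 ∧ 0 < t.2.2 ∧ t.1 ^ 2 + 4 * (t.2.1 * t.2.2) = M

lemma mem_zS (M x y z : ℕ) : (x, y, z) ∈ zS M ↔ 0 < y ∧ 0 < z ∧ x ^ 2 + 4 * (y * z) = M := by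
  simp only [zS, Finset.mem_filter, Finset.mem_product, Finset.mem_range]
  constructor
  · exact fun h => h.2
  · rintro ⟨hy, hz, h⟩
    refine ⟨⟨?_, ?_, ?_⟩, hy, hz, h⟩ <;> nlinarith

def zag (t : ℕ × ℕ × ℕ) : ℕ × ℕ × ℕ :=
  if t.1 + t.2.2 < t.2.1 then (t.1 + 2 * t.2.2, t.2.2, t.2.1 - t.1 - t.2.2)
  else if t.1 < 2 * t.2.1 then (2 * t.2.1 - t.1, t.2.1, t.1 + t.2.2 - t.2.1)
  else (t.1 - 2 * t.2.1, t.1 + t.2.2 - t.2.1, t.2.1)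

lemma zag_cases (M x y z : ℕ) (hM : M % 2 = 1) (hs : ¬ IsSquare M) (h : (x, y, z) ∈ zS M) :
    0 < x ∧ x + z ≠ y ∧ x ≠ 2 * y := by
  obtain ⟨hy, hz, h⟩ := (mem_zS _ _ _ _).mp h
  refine ⟨?_, ?_, ?_⟩
  · rcases Nat.eq_zero_or_pos x with rfl | h'
    · simp at h; omega
    · exact h'
  · rintro rfl
    apply hs
    exact ⟨x + 2 * z, by rw [← h]; ring⟩
  · rintro rfl
    have : M = 2 * (2 * y ^ 2 + 2 * (y * z)) := by rw [← h]; ring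
    omega

lemma zag_mem (M : ℕ) (hM : M % 2 = 1) (hs : ¬ IsSquare M) (t) (h : t ∈ zS M) : zag t ∈ zS M := by
  obtain ⟨x, y, z⟩ := t
  obtain ⟨hx, h1, h2⟩ := zag_cases M x y z hM hs h
  obtain ⟨hy, hz, h⟩ := (mem_zS _ _ _ _).mp h
  simp only [zag]
  split_ifs with c1 c2
  · obtain ⟨w, rfl⟩ := Nat.exists_eq_add_of_lt c1
    have : x + z + w + 1 - x - z = w + 1 := by omega
    rw [this, mem_zS]
    refine ⟨hz, by omega, ?_⟩
    rw [← h]; ring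
  · obtain ⟨w, hw⟩ := Nat.exists_eq_add_of_lt c2
    obtain ⟨v, hv⟩ : ∃ v, x + z = y + v := ⟨x + z - y, by omega⟩
    rw [mem_zS]
    refine ⟨hy, by omega, ?_⟩
    have e1 : 2 * y - x = w + 1 := by omega
    have e2 : x + z - y = v := by omega
    rw [e1, e2, ← h]
    zify at *
    have ex : (x : ℤ) = 2 * y - w - 1 := by linarith
    have ez : (z : ℤ) = y + v - x := by linarith
    rw [ez, ex]; ring
  · obtain ⟨w, rfl⟩ : ∃ w, x = 2 * y + w := ⟨x - 2 * y, by omega⟩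
    have e1 : 2 * y + w - 2 * y = w := by omega
    have e2 : 2 * y + w + z - y = y + w + z := by omega
    rw [e1, e2, mem_zS]
    refine ⟨by omega, hy, ?_⟩
    rw [← h]; ring

lemma zag_zag (M : ℕ) (hM : M % 2 = 1) (hs : ¬ IsSquare M) (t) (h : t ∈ zS M) : zag (zag t) = t := by
  obtain ⟨x, y, z⟩ := t
  obtain ⟨hx, h1, h2⟩ := zag_cases M x y z hM hs h
  obtain ⟨hy, hz, h⟩ := (mem_zS _ _ _ _).mp h
  simp only [zag]
  split_ifs <;> simp only [Prod.mk.injEq] <;> simp_all <;> omega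

lemma zag_fix (M : ℕ) (hM : M % 4 = 1) (hs : ¬ IsSquare M) :
    ((zS M).filter (fun a => zag a = a)).card = (M.divisors.filter (fun d => d * d < M)).card := by
  have hfix : ∀ x y z, (x, y, z) ∈ zS M → zag (x, y, z) = (x, y, z) → y = x := by
    intro x y z h hz
    obtain ⟨hx, h1, h2⟩ := zag_cases M x y z (by omega) hs h
    obtain ⟨hy, hz', h⟩ := (mem_zS _ _ _ _).mp h
    simp only [zag] at hz
    split_ifs at hz <;> simp only [Prod.mk.injEq] at hz <;> omega
  have hq : ∀ d q, d * q = M → d * d < M → ∃ z, 0 < z ∧ q = d + 4 * z := by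
    intro d q h1 h2
    have h3 : d < q := by by_contra hc; nlinarith
    have h4 : ((d % 4) * (q % 4)) % 4 = 1 := by rw [← Nat.mul_mod, h1, hM]
    have h5 : d % 4 = q % 4 := by
      have ha : d % 4 < 4 := Nat.mod_lt _ (by norm_num)
      have hb : q % 4 < 4 := Nat.mod_lt _ (by norm_num)
      generalize d % 4 = a at *
      generalize q % 4 = b at *
      interval_cases a <;> interval_cases b <;> simp_all
    exact ⟨(q - d) / 4, by omega, by omega⟩
  refine Finset.card_bij' (fun t _ => t.1) (fun d _ => (d, d, (M / d - d) / 4)) ?_ ?_ ?_ ?_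
  · rintro ⟨x, y, z⟩ h
    rw [Finset.mem_filter] at h
    obtain rfl := hfix x y z h.1 h.2
    obtain ⟨hy, hz, h⟩ := (mem_zS _ _ _ _).mp h.1
    rw [Finset.mem_filter, Nat.mem_divisors]
    refine ⟨⟨⟨y + 4 * z, by rw [← h]; ring⟩, by omega⟩, ?_⟩
    simp only
    nlinarith [Nat.mul_pos hy hz]
  · intro d hd
    rw [Finset.mem_filter, Nat.mem_divisors] at hd
    obtain ⟨⟨⟨q, hq'⟩, h0⟩, hd⟩ := hd
    have hd0 : 0 < d := by
      rcases Nat.eq_zero_or_pos d with rfl | h'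
      · simp at hq'; omega
      · exact h'
    obtain ⟨z, hz, rfl⟩ := hq d q hq'.symm hd
    have e : M / d = d + 4 * z := by rw [hq', Nat.mul_div_cancel_left _ hd0]
    have e2 : (M / d - d) / 4 = z := by omega
    rw [e2, Finset.mem_filter, mem_zS]
    refine ⟨⟨hd0, hz, by rw [hq']; ring⟩, ?_⟩
    simp only [zag]
    rw [if_neg (by omega), if_pos (by omega)]
    have a1 : 2 * d - d = d := by omega
    have a2 : d + z - d = z := by omega
    simp only [a1, a2]
  · rintro ⟨x, y, z⟩ h
    rw [Finset.mem_filter] at h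
    obtain rfl := hfix x y z h.1 h.2
    obtain ⟨hy, hz, h⟩ := (mem_zS _ _ _ _).mp h.1
    have hM' : M = y * (y + 4 * z) := by rw [← h]; ring
    have e : M / y = y + 4 * z := by rw [hM', Nat.mul_div_cancel_left _ hy]
    simp only [Prod.mk.injEq, true_and]
    omega
  · intro d _; rfl

lemma div_half (M : ℕ) (h0 : M ≠ 0) (hs : ¬ IsSquare M) :
    M.divisors.card = 2 * (M.divisors.filter (fun d => d * d < M)).card := by
  rw [← Finset.card_filter_add_card_filter_not (s := M.divisors) (fun d => d * d < M), two_mul]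
  congr 1
  have key : ∀ d ∈ M.divisors, M / d ∈ M.divisors ∧ d * (M / d) = M ∧ M / (M / d) = d ∧ d * d ≠ M := by
    intro d hd
    have hd := (Nat.mem_divisors.mp hd).1
    exact ⟨Nat.mem_divisors.mpr ⟨Nat.div_dvd_of_dvd hd, h0⟩, Nat.mul_div_cancel' hd,
      Nat.div_div_self hd h0, fun h => hs ⟨d, h.symm⟩⟩
  refine Finset.card_bij' (fun d _ => M / d) (fun d _ => M / d) ?_ ?_ ?_ ?_
  · intro d hd
    rw [Finset.mem_filter] at hd ⊢
    obtain ⟨a, b, c, e⟩ := key d hd.1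
    refine ⟨a, ?_⟩
    have : M < d * d := by omega
    generalize M / d = q at *
    have h5 : q < d := by
      by_contra hc
      nlinarith
    have h6 : 0 < q := by
      rcases Nat.eq_zero_or_pos q with rfl | h'
      · simp at b; omega
      · exact h'
    nlinarith
  · intro d hd
    rw [Finset.mem_filter] at hd ⊢
    obtain ⟨a, b, c, e⟩ := key d hd.1
    refine ⟨a, ?_⟩
    have : d * d < M := hd.2
    generalize M / d = q at *
    intro hc
    nlinarith
  · intro d hd; exact (key d (Finset.mem_filter.mp hd).1).2.2.1
  · intro d hd; exact (key d (Finset.mem_filter.mp hd).1).2.2.1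

lemma swap_fix (M : ℕ) : (zS M).card % 2 = ((zS M).filter (fun a => a.2.1 = a.2.2)).card % 2 := by
  rw [card_invol (zS M) (fun t => (t.1, t.2.2, t.2.1))]
  · congr 2
    ext ⟨x, y, z⟩
    simp
    grind
  · rintro ⟨x, y, z⟩ h
    rw [mem_zS] at *
    exact ⟨h.2.1, h.1, by rw [← h.2.2]; ring⟩
  · simp

lemma even_R (k m M : ℕ) (hm : ¬ 5 ∣ m) (hm8 : m % 8 = 5) (hM : M = 5 ^ (4 * k + 1) * m)
    (hM4 : M % 4 = 1) (hs : ¬ IsSquare M) :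
    2 ∣ ((zS M).filter (fun a => a.2.1 = a.2.2)).card := by
  rw [Nat.dvd_iff_mod_eq_zero, ← swap_fix, card_invol (zS M) zag (zag_mem M (by omega) hs)
    (zag_zag M (by omega) hs), zag_fix M hM4 hs]
  have h1 := div_half M (by omega) hs
  have hms : ¬ IsSquare m := by
    rintro ⟨r, hr⟩
    have h2 : r % 8 = 0 ∨ r % 8 = 1 ∨ r % 8 = 2 ∨ r % 8 = 3 ∨ r % 8 = 4 ∨ r % 8 = 5 ∨ r % 8 = 6 ∨ r % 8 = 7 := by omega
    have h3 : m % 8 = ((r % 8) * (r % 8)) % 8 := by rw [hr, Nat.mul_mod]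
    rcases h2 with h | h | h | h | h | h | h | h <;> rw [h] at h3 <;> omega
  have h2 := div_half m (by omega) hms
  have h3 : M.divisors.card = (4 * k + 2) * m.divisors.card := by
    rw [hM, Nat.Coprime.card_divisors_mul]
    · rw [Nat.divisors_prime_pow (by norm_num)]; simp
    · exact Nat.Coprime.pow_left _ ((Nat.Prime.coprime_iff_not_dvd (by norm_num)).mpr hm)
  rw [h1, h2] at h3
  have : (M.divisors.filter (fun d => d * d < M)).card
    = 2 * ((2 * k + 1) * (m.divisors.filter (fun d => d * d < m)).card) := by nlinarith
  omega

lemma coeff_psi_ex (l : ℕ) : coeff l (psi * ex 2 sA)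
    = (((zS (8 * l + 1)).filter (fun a => a.2.1 = a.2.2)).card : ℤ) := by
  have hc : ∀ b, coeff b (ex 2 sA) = if (2 ∣ b ∧ b / 2 ≠ 0 ∧ IsSquare (b / 2)) then 1 else 0 := by
    intro b
    rw [coeff_ex]
    simp only [sA, coeff_mk]
    split_ifs <;> simp_all
  rw [coeff_mul]
  simp only [hc, psi, coeff_mk, ← ite_and, mul_ite, mul_one, mul_zero]
  rw [Finset.sum_boole]
  norm_cast
  symm
  have key : ∀ x y : ℕ, x ^ 2 + 4 * (y * y) = 8 * l + 1 → ∃ x', x ^ 2 = 8 * x' + 1 ∧ ∃ w, y = 2 * w := by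
    intro x y h
    have hx : x % 2 = 1 := by
      by_contra hc
      obtain ⟨t, rfl⟩ : ∃ t, x = 2 * t := ⟨x / 2, by omega⟩
      rw [mul_pow] at h; omega
    obtain ⟨t, rfl⟩ : ∃ t, x = 2 * t + 1 := ⟨x / 2, by omega⟩
    obtain ⟨s, hs⟩ : ∃ s, t * (t + 1) = s + s := Nat.even_mul_succ_self t
    have e : (2 * t + 1) ^ 2 = 8 * s + 1 := by linear_combination 4 * hs
    refine ⟨s, e, y / 2, ?_⟩
    have h2 : Even (y * y) := ⟨l - s, by omega⟩
    have : Even y := by rcases Nat.even_mul.mp h2 with h | h <;> exact h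
    have := this.two_dvd
    omega
  refine Finset.card_bij (fun t _ => (t.1 ^ 2 / 8, t.2.1 ^ 2 / 2)) ?_ ?_ ?_
  · rintro ⟨x, y, z⟩ h
    rw [Finset.mem_filter] at h
    obtain ⟨h, hyz⟩ := h
    obtain rfl : y = z := hyz
    obtain ⟨x', hx', w, rfl⟩ := key x y ((mem_zS _ _ _ _).mp h).2.2
    obtain ⟨hy, _, h⟩ := (mem_zS _ _ _ _).mp h
    have e1 : x ^ 2 / 8 = x' := by omega
    have e2 : (2 * w) ^ 2 / 2 = 2 * (w * w) := by
      rw [show (2 * w) ^ 2 = 2 * (2 * (w * w)) by ring, Nat.mul_div_cancel_left _ (by norm_num)]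
    have e3 : 2 * (w * w) / 2 = w * w := Nat.mul_div_cancel_left _ (by norm_num)
    have hw : w ≠ 0 := by rintro rfl; simp at hy
    simp only [e1, e2, e3, Finset.mem_filter, Finset.HasAntidiagonal.mem_antidiagonal]
    have g1 : x' + 2 * (w * w) = l := by
      have : 4 * (2 * w * (2 * w)) = 16 * (w * w) := by ring
      omega
    have g2 : IsSquare (8 * x' + 1) := ⟨x, by rw [← hx']; ring⟩
    have g3 : w * w ≠ 0 := mul_ne_zero hw hw
    have g4 : IsSquare (w * w) := ⟨w, rfl⟩
    have g5 : 2 ∣ 2 * (w * w) := ⟨_, rfl⟩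
    tauto
  · rintro ⟨x, y, z⟩ h ⟨x', y', z'⟩ h' hh
    rw [Finset.mem_filter] at h h'
    obtain ⟨h, hyz⟩ := h
    obtain rfl : y = z := hyz
    obtain ⟨h', hyz'⟩ := h'
    obtain rfl : y' = z' := hyz'
    obtain ⟨a, ha, w, rfl⟩ := key x y ((mem_zS _ _ _ _).mp h).2.2
    obtain ⟨a', ha', w', rfl⟩ := key x' y' ((mem_zS _ _ _ _).mp h').2.2
    simp only [Prod.mk.injEq] at hh ⊢
    have h1 : x ^ 2 = x' ^ 2 := by omega
    have h2 : w ^ 2 = w' ^ 2 := by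
      have := hh.2
      rw [mul_pow, mul_pow] at this; omega
    have h1 := Nat.pow_left_injective (n := 2) (by norm_num) h1
    have h2 := Nat.pow_left_injective (n := 2) (by norm_num) h2
    have h1 : x = x' := h1
    have h2 : w = w' := h2
    subst h1 h2
    simp
  · rintro ⟨a, b⟩ h
    rw [Finset.mem_filter, Finset.HasAntidiagonal.mem_antidiagonal] at h
    simp only at h
    have g : a + b = l ∧ IsSquare (8 * a + 1) ∧ 2 ∣ b ∧ b / 2 ≠ 0 ∧ IsSquare (b / 2) := by tauto
    obtain ⟨hab, ⟨x, hx⟩, hb, hb0, y, hy⟩ := g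
    have hy0 : y ≠ 0 := by rintro rfl; omega
    have f1 : x ^ 2 = 8 * a + 1 := by rw [hx]; ring
    have f2 : (2 * y) ^ 2 = 4 * (y * y) := by ring
    refine ⟨(x, 2 * y, 2 * y), ?_, ?_⟩
    · rw [Finset.mem_filter, mem_zS]
      have f3 : 4 * (2 * y * (2 * y)) = 16 * (y * y) := by ring
      refine ⟨⟨by omega, by omega, by omega⟩, rfl⟩
    · simp only [Prod.mk.injEq]
      constructor <;> omega

end RegOver

theorem stmt_7 (n α β γ : ℕ) (j : ℕ) (hj : j ∈ ({1, 2, 3, 4} : Finset ℕ)) :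
    32 ∣ regularOverpartitions 4 8
        (16 * 3 ^ (4 * α) * 5 ^ (4 * β + 1) * 7 ^ (4 * γ) * (5 * n + j)
          + 2 * 3 ^ (4 * α) * 5 ^ (4 * β + 2) * 7 ^ (4 * γ)) := by
  set m := 3 ^ (4 * α) * 7 ^ (4 * γ) * (8 * (5 * n + j) + 5) with hm
  have hN : 16 * 3 ^ (4 * α) * 5 ^ (4 * β + 1) * 7 ^ (4 * γ) * (5 * n + j)
          + 2 * 3 ^ (4 * α) * 5 ^ (4 * β + 2) * 7 ^ (4 * γ) = 2 * (5 ^ (4 * β + 1) * m) := by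
    rw [hm]; ring
  have h3 : 3 ^ (4 * α) % 8 = 1 := by rw [pow_mul, Nat.pow_mod]; norm_num
  have h7 : 7 ^ (4 * γ) % 8 = 1 := by rw [pow_mul, Nat.pow_mod]; norm_num
  have h5 : 5 ^ (4 * β + 1) % 8 = 5 := by
    rw [pow_succ, pow_mul, Nat.mul_mod, Nat.pow_mod]; norm_num
  have hm8 : m % 8 = 5 := by
    rw [hm, Nat.mul_mod, Nat.mul_mod (3 ^ (4 * α)), h3, h7]; omega
  have hm5 : ¬ 5 ∣ m := by
    have p5 : Nat.Prime 5 := by norm_num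
    rw [hm, p5.dvd_mul, p5.dvd_mul]
    rintro ((h | h) | h)
    · have := p5.dvd_of_dvd_pow h; omega
    · have := p5.dvd_of_dvd_pow h; omega
    · simp only [Finset.mem_insert, Finset.mem_singleton] at hj; omega
  have hM8 : (5 ^ (4 * β + 1) * m) % 8 = 1 := by rw [Nat.mul_mod, h5, hm8]
  rw [hN]
  clear_value m
  obtain ⟨l, hl⟩ : ∃ l, 5 ^ (4 * β + 1) * m = 8 * l + 1 := ⟨5 ^ (4 * β + 1) * m / 8, by omega⟩
  have hform : ∀ x y, x ^ 2 + 2 * y ^ 2 ≠ 8 * l + 1 := by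
    intro x y
    rw [← hl]
    have := no_form (2 * β) m x y hm5
    rwa [← mul_assoc] at this
  have hs : ¬ IsSquare (8 * l + 1) := by
    rintro ⟨r, hr⟩
    exact hform r 0 (by rw [hr]; ring)
  rw [hl]
  obtain ⟨c, hc⟩ := coeff_final l
  have e1 : coeff l psi = 0 := by simp only [psi, coeff_mk]; rw [if_neg hs]
  have e2 : coeff l (psi * sA) = 0 := by
    rw [coeff_mul]
    refine Finset.sum_eq_zero ?_
    rintro ⟨a, b⟩ hab
    rw [Finset.HasAntidiagonal.mem_antidiagonal] at hab
    simp only at hab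
    simp only [psi, sA, coeff_mk]
    by_cases h1 : IsSquare (8 * a + 1)
    · rw [if_neg (c := b ≠ 0 ∧ IsSquare b), mul_zero]
      rintro ⟨_, ⟨y, hy⟩⟩
      obtain ⟨x, hx⟩ := h1
      apply hform x (2 * y)
      have : x ^ 2 + 2 * (2 * y) ^ 2 = x * x + 8 * (y * y) := by ring
      rw [this, ← hx, ← hy]; omega
    · rw [if_neg h1, zero_mul]
  have e3 := even_R β m (8 * l + 1) hm5 hm8 hl.symm (by omega) hs
  obtain ⟨t, ht⟩ := e3
  rw [e1, e2, coeff_psi_ex, ht] at hc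
  have : (32 : ℤ) ∣ (regularOverpartitions 4 8 (2 * (8 * l + 1)) : ℤ) :=
    ⟨t + c, by rw [hc]; push_cast; ring⟩
  exact_mod_cast this
end

section
/- For all integers n ≥ 0, α ≥ 0, β ≥ 0, γ ≥ 0 and every k ∈ {1, 2, 3, 4, 5, 6}, the number of (4,8)-regular overpartitions satisfies p̄_{4,8}( 16 · 3^{4α} · 5^{4β} · 7^{4γ+1} · (7n + k) + 2 · 3^{4α} · 5^{4β} · 7^{4γ+2} ) ≡ 0 (mod 32). -/
namespace S8
open PowerSeries PowerSeries.WithPiTopology Filter Topology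

noncomputable def Gs {ι : Type} (w : ι → ℕ) (c : ι → ℤ) : ℤ⟦X⟧ := ∑' i, monomial (w i) (c i)

def FF {ι : Type} (w : ι → ℕ) : Prop := ∀ n, {i | w i ≤ n}.Finite

lemma FF.summable {ι : Type} {w : ι → ℕ} (h : FF w) (c : ι → ℤ) :
    Summable (fun i => (monomial (w i) (c i) : ℤ⟦X⟧)) := by
  rw [summable_iff_summable_coeff]
  intro d
  apply summable_of_hasFiniteSupport
  refine (h d).subset ?_
  intro i hi
  simp only [Function.mem_support, coeff_monomial] at hi
  have : d = w i := by
    by_contra hne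
    simp [hne] at hi
  simp [this]

lemma FF.hasSum {ι : Type} {w : ι → ℕ} (h : FF w) (c : ι → ℤ) :
    HasSum (fun i => (monomial (w i) (c i) : ℤ⟦X⟧)) (Gs w c) := (h.summable c).hasSum

lemma FF.prod {ι κ : Type} {w : ι → ℕ} {v : κ → ℕ} (h : FF w) (h' : FF v) :
    FF (fun p : ι × κ => w p.1 + v p.2) := by
  intro n
  refine ((h n).prod (h' n)).subset ?_
  rintro ⟨a, b⟩ hab
  simp only [Set.mem_ofPred_eq, Set.mem_prod] at *
  omega

lemma FF.comp {ι κ : Type} {w : ι → ℕ} (h : FF w) (f : κ → ι) (hf : Function.Injective f) :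
    FF (fun k => w (f k)) := by
  intro n
  exact (h n).preimage hf.injOn

lemma gs_mul {ι κ : Type} {w : ι → ℕ} {v : κ → ℕ} (h : FF w) (h' : FF v) (c : ι → ℤ) (d : κ → ℤ) :
    Gs w c * Gs v d = Gs (fun p : ι × κ => w p.1 + v p.2) (fun p => c p.1 * d p.2) := by
  have h1 := (h.hasSum c).mul (h'.hasSum d) (by
    simp only [monomial_mul_monomial]
    exact (h.prod h').summable (fun p => c p.1 * d p.2))
  simp only [monomial_mul_monomial] at h1
  exact h1.tsum_eq.symm

lemma gs_equiv {ι κ : Type} (e : κ ≃ ι) (w : ι → ℕ) (c : ι → ℤ) :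
    Gs w c = Gs (fun k => w (e k)) (fun k => c (e k)) :=
  (e.tsum_eq (fun i => (monomial (w i) (c i) : ℤ⟦X⟧))).symm

lemma gs_sum {ι κ : Type} {w : ι ⊕ κ → ℕ} (h : FF w) (c : ι ⊕ κ → ℤ) :
    Gs w c = Gs (fun k => w (.inl k)) (fun k => c (.inl k)) +
      Gs (fun k => w (.inr k)) (fun k => c (.inr k)) := by
  have h1 := (h.comp _ Sum.inl_injective).hasSum (fun k => c (.inl k))
  have h2 := (h.comp _ Sum.inr_injective).hasSum (fun k => c (.inr k))
  exact (HasSum.sum (f := fun i => (monomial (w i) (c i) : ℤ⟦X⟧)) h1 h2).tsum_eq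

lemma gs_shift {ι : Type} {w : ι → ℕ} (h : FF w) (c : ι → ℤ) (n : ℕ) :
    Gs (fun i => n + w i) c = X ^ n * Gs w c := by
  have h1 := (h.hasSum c).mul_left (X ^ n : ℤ⟦X⟧)
  simp only [X_pow_eq, monomial_mul_monomial, one_mul] at h1
  rw [X_pow_eq]
  exact h1.tsum_eq

lemma gs_supp {ι : Type} {w : ι → ℕ} (h : FF w) (c : ι → ℤ) (n : ℕ) (hn : coeff n (Gs w c) ≠ 0) :
    ∃ i, w i = n := by
  by_contra! hne
  apply hn
  have h1 := (hasSum_iff_hasSum_coeff ℤ).1 (h.hasSum c) n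
  have : (fun i => coeff n ((monomial (w i) (c i) : ℤ⟦X⟧))) = fun _ => 0 := by
    ext i
    rw [coeff_monomial, if_neg (fun hh => hne i hh.symm)]
  rw [this] at h1
  exact h1.unique hasSum_zero

lemma gs_nat {w : ℤ → ℕ} (h : FF w) (c : ℤ → ℤ) :
    Gs w c = Gs (fun n : ℕ => w n) (fun n : ℕ => c n) +
      Gs (fun n : ℕ => w (-(n + 1))) (fun n : ℕ => c (-(n + 1))) := by
  have h1 := (h.comp (fun n : ℕ => (n : ℤ)) Nat.cast_injective).hasSum (fun k => c k)
  have h2 := (h.comp (fun n : ℕ => (-(n + 1) : ℤ)) (by intro a b hab; simpa using hab)).hasSum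
    (fun k => c (-(k + 1)))
  exact (HasSum.of_nat_of_neg_add_one (f := fun i => (monomial (w i) (c i) : ℤ⟦X⟧)) h1 h2).tsum_eq

lemma gs_zero_add {w : ℕ → ℕ} (h : FF w) (c : ℕ → ℤ) :
    Gs w c = monomial (w 0) (c 0) + Gs (fun n : ℕ => w (n + 1)) (fun n : ℕ => c (n + 1)) :=
  (h.summable c).tsum_eq_zero_add

/-- weights -/
def sq (k : ℕ) (a : ℤ) : ℕ := k * a.natAbs ^ 2
def tr (k : ℕ) (a : ℤ) : ℕ := k * (a * (a + 1)).toNat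
def sg (a : ℤ) : ℤ := (Int.negOnePow a : ℤˣ)

lemma sq_cast (k : ℕ) (a : ℤ) : (sq k a : ℤ) = k * a ^ 2 := by simp [sq]
lemma tr_cast (k : ℕ) (a : ℤ) : (tr k a : ℤ) = k * (a * (a + 1)) := by
  have : 0 ≤ a * (a + 1) := by
    rcases le_or_gt 0 a with h | h
    · positivity
    · nlinarith
  simp [tr, Int.toNat_of_nonneg this]

lemma FF_sq {k : ℕ} (hk : 0 < k) : FF (sq k) := by
  intro n
  refine (Set.finite_Icc (-(n : ℤ)) n).subset ?_
  intro a ha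
  simp only [Set.mem_ofPred_eq] at ha
  have h1 : ((sq k a : ℕ) : ℤ) ≤ n := by exact_mod_cast ha
  rw [sq_cast] at h1
  have hk' : (1 : ℤ) ≤ k := by exact_mod_cast hk
  have : a ^ 2 ≤ n := by nlinarith [sq_nonneg a]
  constructor <;> nlinarith

lemma FF_tr {k : ℕ} (hk : 0 < k) : FF (tr k) := by
  intro n
  refine (Set.finite_Icc (-(n + 1 : ℤ)) (n + 1)).subset ?_
  intro a ha
  simp only [Set.mem_ofPred_eq] at ha
  have h1 : ((tr k a : ℕ) : ℤ) ≤ n := by exact_mod_cast ha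
  have h0 := tr_cast 1 a
  have h2 : (0 : ℤ) ≤ tr 1 a := by positivity
  rw [tr_cast] at h1
  rw [h0] at h2
  have hk' : (1 : ℤ) ≤ k := by exact_mod_cast hk
  have : a * (a + 1) ≤ n := by push_cast at h2; nlinarith
  constructor <;> nlinarith

noncomputable def T (k : ℕ) : ℤ⟦X⟧ := Gs (sq k) (fun _ => 1)
noncomputable def t (k : ℕ) : ℤ⟦X⟧ := Gs (sq k) sg
noncomputable def Ps (k : ℕ) : ℤ⟦X⟧ := Gs (tr k) (fun _ => 1)

/-- integers split by parity -/
def eZ : ℤ ⊕ ℤ ≃ ℤ where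
  toFun := Sum.elim (fun x => 2 * x) (fun x => 2 * x + 1)
  invFun a := if a % 2 = 0 then .inl (a / 2) else .inr (a / 2)
  left_inv := by
    rintro (x | x)
    · simp
    · have : (2 * x + 1) % 2 ≠ 0 := by omega
      simp only [Sum.elim_inr, this, if_false]
      congr 1
      omega
  right_inv := by
    intro a
    dsimp only
    split_ifs with h
    · simp only [Sum.elim_inl]; omega
    · simp only [Sum.elim_inr]; omega

/-- pairs of integers split by parity of the sum -/
def eP : (ℤ × ℤ) ⊕ (ℤ × ℤ) ≃ ℤ × ℤ where
  toFun := Sum.elim (fun p => (p.1 + p.2, p.1 - p.2)) (fun p => (p.1 + p.2 + 1, p.1 - p.2))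
  invFun a := if (a.1 + a.2) % 2 = 0 then .inl ((a.1 + a.2) / 2, (a.1 - a.2) / 2)
    else .inr ((a.1 + a.2) / 2, (a.1 - a.2) / 2)
  left_inv := by
    rintro (⟨x, y⟩ | ⟨x, y⟩)
    · have : (x + y + (x - y)) % 2 = 0 := by omega
      simp only [Sum.elim_inl, this, if_true]
      congr 2 <;> omega
    · have : ¬ (x + y + 1 + (x - y)) % 2 = 0 := by omega
      simp only [Sum.elim_inr, this, if_false]
      congr 2 <;> omega
  right_inv := by
    rintro ⟨a, b⟩
    dsimp only
    split_ifs with h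
    · simp only [Sum.elim_inl, Prod.mk.injEq]; omega
    · simp only [Sum.elim_inr, Prod.mk.injEq]; omega

def eP' : (ℤ × ℤ) ⊕ (ℤ × ℤ) ≃ ℤ × ℤ where
  toFun := Sum.elim (fun p => (p.1 + p.2, p.1 - p.2)) (fun p => (p.1 + p.2, -1 - (p.1 - p.2)))
  invFun a := if (a.1 + a.2) % 2 = 0 then .inl ((a.1 + a.2) / 2, (a.1 - a.2) / 2)
    else .inr ((a.1 - a.2 - 1) / 2, (a.1 + a.2 + 1) / 2)
  left_inv := by
    rintro (⟨x, y⟩ | ⟨x, y⟩)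
    · have : (x + y + (x - y)) % 2 = 0 := by omega
      simp only [Sum.elim_inl, this, if_true]
      congr 2 <;> omega
    · have : ¬ (x + y + (-1 - (x - y))) % 2 = 0 := by omega
      simp only [Sum.elim_inr, this, if_false]
      congr 2 <;> omega
  right_inv := by
    rintro ⟨a, b⟩
    dsimp only
    split_ifs with h
    · simp only [Sum.elim_inl, Prod.mk.injEq]; omega
    · simp only [Sum.elim_inr, Prod.mk.injEq]; omega

lemma I3 {k : ℕ} (hk : 0 < k) : T k = T (4 * k) + X ^ k * Ps (4 * k) := by
  unfold T Ps
  rw [gs_equiv eZ, gs_sum ((FF_sq hk).comp _ eZ.injective), ← gs_shift (FF_tr (by omega))]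
  congr 2
  · ext a
    zify
    simp only [eZ, sq_cast, Equiv.coe_fn_mk, Sum.elim_inl]
    push_cast
    ring
  · ext a
    zify
    simp only [eZ, sq_cast, tr_cast, Equiv.coe_fn_mk, Sum.elim_inr]
    push_cast
    ring

lemma I2 {k : ℕ} (hk : 0 < k) : T k ^ 2 = T (2 * k) ^ 2 + X ^ k * Ps (2 * k) ^ 2 := by
  unfold T Ps
  have h2 : 0 < 2 * k := by omega
  rw [pow_two, pow_two, pow_two, gs_mul (FF_sq hk) (FF_sq hk), gs_mul (FF_sq h2) (FF_sq h2),
    gs_mul (FF_tr h2) (FF_tr h2), gs_equiv eP,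
    gs_sum (((FF_sq hk).prod (FF_sq hk)).comp _ eP.injective),
    ← gs_shift ((FF_tr h2).prod (FF_tr h2))]
  congr 2
  · ext a
    zify
    simp only [eP, sq_cast, Equiv.coe_fn_mk, Sum.elim_inl]
    push_cast
    ring
  · ext a
    zify
    simp only [eP, sq_cast, tr_cast, Equiv.coe_fn_mk, Sum.elim_inr]
    push_cast
    ring

lemma I4 {k : ℕ} (hk : 0 < k) : Ps k ^ 2 = 2 * (Ps (2 * k) * T (2 * k)) := by
  unfold T Ps
  have h2 : 0 < 2 * k := by omega
  rw [pow_two, two_mul (Gs _ _ * Gs _ _), gs_mul (FF_tr hk) (FF_tr hk), gs_mul (FF_tr h2) (FF_sq h2),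
    gs_equiv eP',
    gs_sum (((FF_tr hk).prod (FF_tr hk)).comp _ eP'.injective)]
  congr 2
  · ext a
    zify
    simp only [eP', sq_cast, tr_cast, Equiv.coe_fn_mk, Sum.elim_inl]
    push_cast
    ring
  · ext a
    zify
    simp only [eP', sq_cast, tr_cast, Equiv.coe_fn_mk, Sum.elim_inr]
    push_cast
    ring

lemma sg_add (a b : ℤ) : sg (a + b) = sg a * sg b := by simp [sg, Int.negOnePow_add]
lemma sg_sub (a b : ℤ) : sg (a - b) = sg a * sg b := by simp [sg, Int.negOnePow_sub]
lemma sg_neg (a : ℤ) : sg (-a) = sg a := by simp [sg]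
lemma sg_one : sg 1 = -1 := by simp [sg]
lemma sg_zero : sg 0 = 1 := by simp [sg]

lemma sg_tr (k : ℕ) : Gs (tr k) sg = 0 := by
  have h : Gs (tr k) sg = - Gs (tr k) sg := by
    conv_lhs => rw [gs_equiv (Equiv.subLeft (-1 : ℤ))]
    unfold Gs
    rw [← tsum_neg]
    congr 1
    ext1 a
    have h1 : tr k (-1 - a) = tr k a := by
      zify; simp only [tr_cast]; ring
    have h2 : sg (-1 - a) = - sg a := by
      rw [sg_sub, sg_neg, sg_one]; ring
    simp [h1, h2]
  ext n
  have h2 := congrArg (coeff n) h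
  rw [map_neg] at h2
  rw [map_zero]
  omega

lemma I1 {k : ℕ} (hk : 0 < k) : T k * t k = t (2 * k) ^ 2 := by
  unfold T t
  have h2 : 0 < 2 * k := by omega
  have e2 : Gs (fun x => sq k (eP (Sum.inr x)).1 + sq k (eP (Sum.inr x)).2)
      (fun x => 1 * sg (eP (Sum.inr x)).2) = X ^ k * (Gs (tr (2 * k)) sg * Gs (tr (2 * k)) sg) := by
    rw [gs_mul (FF_tr h2) (FF_tr h2), ← gs_shift ((FF_tr h2).prod (FF_tr h2))]
    congr 1
    · ext a
      zify
      simp only [eP, sq_cast, tr_cast, Equiv.coe_fn_mk, Sum.elim_inr]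
      push_cast
      ring
    · ext a
      simp only [eP, Equiv.coe_fn_mk, Sum.elim_inr, sg_sub]
      ring
  rw [pow_two, gs_mul (FF_sq hk) (FF_sq hk), gs_mul (FF_sq h2) (FF_sq h2),
    gs_equiv eP,
    gs_sum (((FF_sq hk).prod (FF_sq hk)).comp _ eP.injective), e2, sg_tr (2 * k), mul_zero, mul_zero,
    add_zero]
  congr 1
  · ext a
    zify
    simp only [eP, sq_cast, Equiv.coe_fn_mk, Sum.elim_inl]
    push_cast
    ring
  · ext a
    simp only [eP, Equiv.coe_fn_mk, Sum.elim_inl, sg_sub]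
    ring

/-- half-series -/
noncomputable def ps (k : ℕ) : ℤ⟦X⟧ := Gs (fun n : ℕ => tr k n) (fun _ => 1)
noncomputable def u (k : ℕ) : ℤ⟦X⟧ := Gs (fun n : ℕ => sq k (n + 1)) (fun n => sg (n + 1))

lemma FF_ps {k : ℕ} (hk : 0 < k) : FF (fun n : ℕ => tr k n) :=
  (FF_tr hk).comp (fun n : ℕ => (n : ℤ)) Nat.cast_injective
lemma FF_u {k : ℕ} (hk : 0 < k) : FF (fun n : ℕ => sq k (n + 1)) :=
  (FF_sq hk).comp (fun n : ℕ => (n + 1 : ℤ)) (by intro a b hab; simpa using hab)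

lemma Ps_eq {k : ℕ} (hk : 0 < k) : Ps k = 2 * ps k := by
  unfold Ps ps
  rw [gs_nat (FF_tr hk), two_mul]
  congr 2
  ext a
  zify
  simp only [tr_cast]
  ring

lemma t_eq {k : ℕ} (hk : 0 < k) : t k = 1 + 2 * u k := by
  unfold t u
  rw [gs_nat (FF_sq hk), gs_zero_add ((FF_sq hk).comp (fun n : ℕ => (n : ℤ)) Nat.cast_injective)]
  have : Gs (fun n : ℕ => sq k (-(n + 1))) (fun n : ℕ => sg (-(n + 1))) =
      Gs (fun n : ℕ => sq k (n + 1)) (fun n => sg (n + 1)) := by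
    simp only [sg_neg, sq, Int.natAbs_neg]
  rw [this]
  simp [sq, sg_zero]
  ring

lemma ps_supp {k n : ℕ} (hk : 0 < k) (h : coeff n (ps k) ≠ 0) : ∃ a : ℕ, n = k * (a * (a + 1)) := by
  obtain ⟨i, hi⟩ := gs_supp (FF_ps hk) _ _ h
  refine ⟨i, ?_⟩
  zify
  rw [← hi, tr_cast]

lemma u_supp {k n : ℕ} (hk : 0 < k) (h : coeff n (u k) ≠ 0) : ∃ a : ℕ, n = k * a ^ 2 := by
  obtain ⟨i, hi⟩ := gs_supp (FF_u hk) _ _ h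
  refine ⟨i + 1, ?_⟩
  zify
  rw [← hi, sq_cast]

lemma Ps_supp {k n : ℕ} (hk : 0 < k) (h : coeff n (Ps k) ≠ 0) : k ∣ n := by
  obtain ⟨i, hi⟩ := gs_supp (FF_tr hk) _ _ h
  exact ⟨_, hi.symm⟩
lemma T_supp {k n : ℕ} (hk : 0 < k) (h : coeff n (T k) ≠ 0) : k ∣ n := by
  obtain ⟨i, hi⟩ := gs_supp (FF_sq hk) _ _ h
  exact ⟨_, hi.symm⟩
lemma t_supp {k n : ℕ} (hk : 0 < k) (h : coeff n (t k) ≠ 0) : k ∣ n := by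
  obtain ⟨i, hi⟩ := gs_supp (FF_sq hk) _ _ h
  exact ⟨_, hi.symm⟩

section shanks
variable {R : Type} [CommRing R] (q : R)

def Dn (n : ℕ) : R := ∏ i ∈ Finset.range n, (1 + (-1) * q ^ (i + 1))
def En (n : ℕ) : R := ∏ i ∈ Finset.range n, (1 + 1 * q ^ (i + 1))
def Kn (s n : ℕ) : R := ∏ i ∈ Finset.Ico s n, (1 + (-1) * q ^ (i + 1))

lemma Kn_self (n : ℕ) : Kn q n n = 1 := by simp [Kn]
lemma Kn_bot {s n : ℕ} (h : s < n) : Kn q s n = (1 - q ^ (s + 1)) * Kn q (s + 1) n := by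
  unfold Kn
  rw [Finset.prod_eq_prod_Ico_succ_bot h]
  ring
lemma Kn_top {s n : ℕ} (h : s ≤ n) : Kn q s (n + 1) = (1 - q ^ (n + 1)) * Kn q s n := by
  unfold Kn
  rw [Finset.prod_Ico_succ_top h]
  ring
lemma En_succ (n : ℕ) : En q (n + 1) = En q n * (1 + q ^ (n + 1)) := by
  unfold En
  rw [Finset.prod_range_succ, one_mul]
lemma Dn_succ (n : ℕ) : Dn q (n + 1) = Dn q n * (1 - q ^ (n + 1)) := by
  unfold Dn
  rw [Finset.prod_range_succ]
  ring
lemma Dn_eq (n : ℕ) : Dn q n = Kn q 0 n := by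
  simp [Kn, Dn]

def Wn (n r : ℕ) : R := q ^ ((r + 1) * (n + 1)) * En q r * Kn q r n

def Err (n : ℕ) : R :=
  ∑ s ∈ Finset.range n, (-1) ^ (s + 1) * (q ^ ((s + 1) * (n + 1)) * (En q s * Kn q (s + 1) n))

lemma telesc (n r : ℕ) (hr : r ≤ n) :
    ∑ s ∈ Finset.range r, (-1) ^ (s + 1) * (q ^ ((s + 1) * (n + 2)) * (En q s * Kn q (s + 1) (n + 1)))
     = (1 + q ^ (n + 1)) *
      ∑ s ∈ Finset.range r, (-1) ^ (s + 1) * (q ^ ((s + 1) * (n + 1)) * (En q s * Kn q (s + 1) n))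
      + (Wn q n 0 - (-1) ^ r * Wn q n r) := by
  induction r with
  | zero => simp
  | succ r ih =>
    rw [Finset.sum_range_succ, Finset.sum_range_succ, ih (by omega)]
    unfold Wn
    rw [Kn_top q (by omega : r + 1 ≤ n), Kn_bot q (by omega : r < n), En_succ]
    have : q ^ ((r + 1) * (n + 2)) = q ^ ((r + 1) * (n + 1)) * q ^ (r + 1) := by ring
    rw [this]
    have : q ^ ((r + 1 + 1) * (n + 1)) = q ^ ((r + 1) * (n + 1)) * q ^ (n + 1) := by ring
    rw [this]
    generalize q ^ ((r + 1) * (n + 1)) = A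
    generalize q ^ (n + 1) = B
    generalize q ^ (r + 1) = Q
    generalize Kn q (r + 1) n = K
    rw [pow_succ]
    ring

lemma shanks (n : ℕ) :
    (1 + 2 * ∑ s ∈ Finset.range n, (-1) ^ (s + 1) * q ^ ((s + 1) ^ 2)) * En q n
      = Dn q n + 2 * Err q n := by
  induction n with
  | zero => simp [En, Dn, Err]
  | succ n ih =>
    rw [Finset.sum_range_succ]
    have h : Err q (n + 1) = (1 + q ^ (n + 1)) * Err q n + (Wn q n 0 - (-1) ^ n * Wn q n n)
      + (-1) ^ (n + 1) * (q ^ ((n + 1) * (n + 2)) * En q n) := by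
      conv_lhs => unfold Err
      rw [Finset.sum_range_succ, telesc q n n le_rfl, Kn_self, Err]
      ring
    rw [h, Dn_succ, En_succ]
    have hW : Wn q n 0 = q ^ (n + 1) * Dn q n := by
      simp [Wn, Dn_eq, En]
    have hW' : Wn q n n = q ^ ((n + 1) ^ 2) * En q n := by
      simp [Wn, Kn_self, pow_two]
    have e : q ^ ((n + 1) * (n + 2)) = q ^ ((n + 1) ^ 2) * q ^ (n + 1) := by ring
    rw [hW, hW', e]
    linear_combination (1 + q ^ (n + 1)) * ih

lemma err_dvd (n : ℕ) : q ^ (n + 1) ∣ Err q n := by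
  unfold Err
  apply Finset.dvd_sum
  intro s _
  apply Dvd.dvd.mul_left
  apply Dvd.dvd.mul_right
  exact pow_dvd_pow _ (by nlinarith)
end shanks

lemma tendsto_zero_of_dvd (f : ℕ → ℤ⟦X⟧) (h : ∀ n, X ^ (n + 1) ∣ f n) :
    Tendsto f atTop (𝓝 0) := by
  rw [tendsto_iff_coeff_tendsto]
  intro d
  apply tendsto_atTop_of_eventually_const (i₀ := d)
  intro i hi
  rw [map_zero]
  exact X_pow_dvd_iff.1 (h i) d (by omega)

lemma mult_of_dvd (f : ℕ → ℤ⟦X⟧) (h : ∀ n, X ^ (n + 1) ∣ f n) :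
    Multipliable (fun i => 1 + f i) := by
  apply multipliable_one_add_of_tendsto_order_atTop_nhds_top
  refine ENat.tendsto_nhds_top_iff_natCast_lt.mpr fun n ↦ eventually_atTop.mpr ⟨n, ?_⟩
  intro m hm
  have h1 : ((m + 1 : ℕ) : ℕ∞) ≤ (f m).order := nat_le_order _ _ (fun i hi => X_pow_dvd_iff.1 (h m) i hi)
  refine lt_of_lt_of_le ?_ h1
  exact_mod_cast (by omega : n < m + 1)

/-- product over all parts satisfying `p` of `1 + ε q^i` -/
noncomputable def F (ε : ℤ⟦X⟧) (p : ℕ → Prop) [DecidablePred p] : ℤ⟦X⟧ :=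
  ∏' i, if p (i + 1) then 1 + ε * X ^ (i + 1) else 1

lemma F_mult (ε : ℤ⟦X⟧) (p : ℕ → Prop) [DecidablePred p] :
    Multipliable (fun i : ℕ => if p (i + 1) then 1 + ε * X ^ (i + 1) else 1) := by
  convert mult_of_dvd (fun i : ℕ => if p (i + 1) then ε * X ^ (i + 1) else 0) ?_ using 2 with i
  · split_ifs <;> simp
  · intro n
    split_ifs
    · exact Dvd.intro_left _ rfl
    · exact dvd_zero _

lemma F_mul (ε : ℤ⟦X⟧) (p r s : ℕ → Prop) [DecidablePred p] [DecidablePred r] [DecidablePred s]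
    (h : ∀ i, s i ↔ (p i ∨ r i)) (h' : ∀ i, ¬ (p i ∧ r i)) : F ε p * F ε r = F ε s := by
  unfold F
  rw [← (F_mult ε p).tprod_mul (F_mult ε r)]
  congr 1
  ext1 i
  have h1 := h (i + 1)
  have h2 := h' (i + 1)
  by_cases hp : p (i + 1) <;> by_cases hr : r (i + 1) <;> simp_all

lemma F_dvd (ε : ℤ⟦X⟧) {k : ℕ} (hk : 0 < k) :
    HasProd (fun i : ℕ => 1 + ε * (X ^ k) ^ (i + 1)) (F ε (k ∣ ·)) := by
  have h := (F_mult ε (k ∣ ·)).hasProd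
  have hinj : Function.Injective (fun i : ℕ => k * (i + 1) - 1) := by
    intro a b hab
    have h1 : 0 < k * (a + 1) := by positivity
    have h2 : 0 < k * (b + 1) := by positivity
    have h3 : k * (a + 1) = k * (b + 1) := by dsimp only at hab; omega
    have := Nat.eq_of_mul_eq_mul_left hk h3
    omega
  rw [← hinj.hasProd_iff] at h
  · unfold F
    convert h using 2 with i
    have h1 : 0 < k * (i + 1) := by positivity
    have h2 : k * (i + 1) - 1 + 1 = k * (i + 1) := by omega
    simp [h2, pow_mul]
  · intro x hx
    rw [if_neg]
    rintro ⟨c, hc⟩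
    apply hx
    refine ⟨c - 1, ?_⟩
    have : c ≠ 0 := by rintro rfl; omega
    have : c - 1 + 1 = c := by omega
    simp only [this]
    omega

lemma sg_nat (n : ℕ) : sg n = (-1) ^ n := by
  simp [sg, Int.coe_negOnePow_natCast]

lemma gauss {k : ℕ} (hk : 0 < k) : t k * F 1 (k ∣ ·) = F (-1) (k ∣ ·) := by
  have hE : Tendsto (fun n => En (X ^ k : ℤ⟦X⟧) n) atTop (𝓝 (F 1 (k ∣ ·))) :=
    (F_dvd 1 hk).tendsto_prod_nat
  have hD : Tendsto (fun n => Dn (X ^ k : ℤ⟦X⟧) n) atTop (𝓝 (F (-1) (k ∣ ·))) :=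
    (F_dvd (-1) hk).tendsto_prod_nat
  have hu : Tendsto (fun n => ∑ s ∈ Finset.range n, (-1) ^ (s + 1) * (X ^ k : ℤ⟦X⟧) ^ ((s + 1) ^ 2))
      atTop (𝓝 (u k)) := by
    have := ((FF_u hk).hasSum (fun n => sg (n + 1))).tendsto_sum_nat
    refine this.congr ?_
    intro n
    apply Finset.sum_congr rfl
    intro s _
    have e1 : sq k (s + 1) = k * (s + 1) ^ 2 := by zify; rw [sq_cast]
    have e2 : sg (s + 1) = (-1) ^ (s + 1) := by rw [← sg_nat]; push_cast; rfl
    rw [e1, e2, ← pow_mul, monomial_eq_C_mul_X_pow]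
    simp
  have hL := ((hu.const_mul 2).const_add 1).mul hE
  simp only [shanks] at hL
  have h0 : Tendsto (fun n => Err (X ^ k : ℤ⟦X⟧) n) atTop (𝓝 0) := by
    apply tendsto_zero_of_dvd
    intro n
    refine dvd_trans ?_ (err_dvd (X ^ k : ℤ⟦X⟧) n)
    rw [← pow_mul]
    exact pow_dvd_pow _ (by nlinarith)
  have hR := hD.add (h0.const_mul 2)
  have := tendsto_nhds_unique hL hR
  rw [t_eq hk, this]
  simp

lemma F_ne_zero {k : ℕ} (hk : 0 < k) : F 1 (k ∣ ·) ≠ 0 := by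
  intro h
  have h1 := (F_dvd 1 hk).map (constantCoeff (R := ℤ)) (continuous_constantCoeff ℤ)
  rw [h] at h1
  have h2 : (⇑(constantCoeff (R := ℤ)) ∘ fun i : ℕ => (1 : ℤ⟦X⟧) + 1 * (X ^ k) ^ (i + 1)) = fun _ => 1 := by
    ext i
    simp [hk.ne']
  rw [h2, map_zero] at h1
  exact absurd (h1.unique hasProd_one) (by norm_num)

/-- generating function -/
noncomputable def P : ℤ⟦X⟧ := PowerSeries.mk fun n => (regularOverpartitions 4 8 n : ℤ)

noncomputable def PA : ℤ⟦X⟧ := PowerSeries.mk fun n =>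
  (((Nat.Partition.distincts n).filter (fun lam => ∀ i ∈ lam.parts, i % 8 ≠ 4)).card : ℤ)
noncomputable def PB : ℤ⟦X⟧ := PowerSeries.mk fun n =>
  ((Nat.Partition.restricted n (fun i => i % 8 ≠ 4)).card : ℤ)

lemma P_eq : P = PA * PB := by
  ext n
  rw [coeff_mul, Finset.Nat.sum_antidiagonal_eq_sum_range_succ_mk]
  simp only [P, PA, PB, coeff_mk, regularOverpartitions]
  push_cast
  rfl

lemma PA_eq : PA = F 1 (fun i => i % 8 ≠ 4) := by
  have h := Nat.Partition.hasProd_genFun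
    (fun i c ↦ if i % 8 ≠ 4 ∧ c < 2 then (1 : ℤ) else 0)
  have e : PA = Nat.Partition.genFun (fun i c ↦ if i % 8 ≠ 4 ∧ c < 2 then (1 : ℤ) else 0) := by
    simp_rw [PA, Nat.Partition.genFun, ← Nat.Partition.countRestricted_two,
      Nat.Partition.countRestricted, Finset.filter_filter, Finset.card_filter, Finsupp.prod,
      Finset.prod_boole]
    congr 1
    ext n
    push_cast
    apply Finset.sum_congr rfl
    intro p _
    congr 1
    simp
    grind
  rw [e, ← h.tprod_eq, F]
  congr 1
  ext1 i
  rw [tsum_eq_single 0]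
  · by_cases hi : (i + 1) % 8 = 4
    · rw [if_neg (by omega), if_neg (by omega), smul_eq_C_mul]
      simp
    · rw [if_pos (by omega), if_pos (by omega), smul_eq_C_mul]
      simp
  · intro b hb
    rw [if_neg (by omega), smul_eq_C_mul]
    simp

lemma PB_eq : PB * F (-1) (fun i => i % 8 ≠ 4) = 1 := by
  have h := Nat.Partition.hasProd_powerSeriesMk_card_restricted ℤ (fun i => i % 8 ≠ 4)
  have h2 := h.mul (F_mult (-1) (fun i => i % 8 ≠ 4)).hasProd
  have h3 : (fun b : ℕ => (if (b + 1) % 8 ≠ 4 then ∑' (j : ℕ), (X : ℤ⟦X⟧) ^ ((b + 1) * j) else 1) *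
    if (b + 1) % 8 ≠ 4 then 1 + -1 * X ^ (b + 1) else 1) = fun _ => 1 := by
    ext1 b
    split_ifs
    · simp_rw [pow_mul]
      rw [neg_one_mul, ← sub_eq_add_neg, tsum_pow_mul_one_sub_of_constantCoeff_eq_zero (by simp)]
    · simp
  rw [h3] at h2
  exact h2.unique hasProd_one

lemma P_theta : P * t 1 * t 8 = t 4 := by
  have hP : P * F (-1) (fun i => i % 8 ≠ 4) = F 1 (fun i => i % 8 ≠ 4) := by
    rw [P_eq, mul_assoc, PB_eq, mul_one, PA_eq]
  have key : ∀ ε, F ε (fun i => i % 8 ≠ 4) * F ε (4 ∣ ·) = F ε (1 ∣ ·) * F ε (8 ∣ ·) := by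
    intro ε
    rw [← F_mul ε (fun i => i % 8 = 4) (8 ∣ ·) (4 ∣ ·) (by intro i; omega) (by intro i; omega),
      ← mul_assoc, F_mul ε (fun i => i % 8 ≠ 4) (fun i => i % 8 = 4) (1 ∣ ·)]
    · intro i; simp; omega
    · intro i; omega
  have k1 := key 1
  have k2 := key (-1)
  rw [← gauss one_pos, ← gauss (by norm_num : 0 < 8), ← gauss (by norm_num : 0 < 4)] at k2
  have hne : F 1 (1 ∣ ·) * F 1 (8 ∣ ·) * F 1 (4 ∣ ·) ≠ 0 :=
    mul_ne_zero (mul_ne_zero (F_ne_zero one_pos) (F_ne_zero (by norm_num))) (F_ne_zero (by norm_num))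
  apply mul_right_cancel₀ hne
  linear_combination (-P) * F 1 (4 ∣ ·) * k2 + t 4 * F 1 (4 ∣ ·) ^ 2 * hP + t 4 * F 1 (4 ∣ ·) * k1

/-- part with exponents `r` modulo 4 -/
noncomputable def op (r : ℕ) (f : ℤ⟦X⟧) : ℤ⟦X⟧ := PowerSeries.mk fun n => if n % 4 = r then coeff n f else 0

/-- series in `X ^ 4` -/
def S4 (g : ℤ⟦X⟧) : Prop := ∀ n, coeff n g ≠ 0 → 4 ∣ n

lemma S4.mul {f g : ℤ⟦X⟧} (hf : S4 f) (hg : S4 g) : S4 (f * g) := by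
  intro n hn
  rw [coeff_mul] at hn
  obtain ⟨⟨i, j⟩, hij, h⟩ := Finset.exists_ne_zero_of_sum_ne_zero hn
  have h1 := hf i (left_ne_zero_of_mul h)
  have h2 := hg j (right_ne_zero_of_mul h)
  rw [Finset.HasAntidiagonal.mem_antidiagonal] at hij
  simp only at hij
  omega

lemma op_mul (r : ℕ) (f g : ℤ⟦X⟧) (hg : S4 g) : op r (f * g) = op r f * g := by
  ext n
  simp only [op, coeff_mk, coeff_mul]
  have key : ∀ p ∈ Finset.HasAntidiagonal.antidiagonal n,
      (if p.1 % 4 = r then coeff p.1 f else 0) * coeff p.2 g =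
      if n % 4 = r then coeff p.1 f * coeff p.2 g else 0 := by
    rintro ⟨i, j⟩ hij
    rw [Finset.HasAntidiagonal.mem_antidiagonal] at hij
    simp only at hij ⊢
    by_cases h0 : coeff j g = 0
    · simp [h0]
    · have := hg j h0
      have e : i % 4 = n % 4 := by omega
      rw [e]
      split_ifs <;> simp
  rw [Finset.sum_congr rfl key]
  split_ifs <;> simp

lemma op_add (r : ℕ) (f g : ℤ⟦X⟧) : op r (f + g) = op r f + op r g := by
  ext n
  simp only [op, coeff_mk, map_add]
  split_ifs <;> simp

lemma op_X_pow (r m : ℕ) : op r (X ^ m) = if m % 4 = r then X ^ m else 0 := by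
  ext n
  simp only [op, coeff_mk, coeff_X_pow]
  by_cases h : n = m
  · subst h
    split_ifs <;> simp_all [coeff_X_pow]
  · split_ifs <;> simp [coeff_X_pow, h]

lemma op_X_mul (r m : ℕ) (g : ℤ⟦X⟧) (hg : S4 g) :
    op r (X ^ m * g) = (if m % 4 = r then X ^ m else 0) * g := by
  rw [op_mul r _ _ hg, op_X_pow]

lemma S4_of_dvd {k : ℕ} {f : ℤ⟦X⟧} (hk : 4 ∣ k) (h : ∀ n, coeff n f ≠ 0 → k ∣ n) : S4 f :=
  fun n hn => hk.trans (h n hn)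

lemma t_ne_zero {k : ℕ} (hk : 0 < k) : t k ≠ 0 := by
  intro h
  have h1 := congrArg (coeff 0) (t_eq hk)
  rw [h, map_zero, map_add, two_mul, map_add] at h1
  simp only [coeff_zero_one] at h1
  omega

lemma main_series : op 2 P * t 4 ^ 4 = 4 * (X ^ 2 * (ps 8 * t 16 ^ 2)) := by
  have a1 := I1 (k := 1) one_pos
  have a2 := I1 (k := 2) (by norm_num)
  have a4 := I1 (k := 4) (by norm_num)
  have a8 := I1 (k := 8) (by norm_num)
  have b1 := I3 (k := 1) one_pos
  have b2 := I2 (k := 2) (by norm_num)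
  have c := I4 (k := 4) (by norm_num)
  have d := Ps_eq (k := 8) (by norm_num)
  norm_num at a1 a2 a4 a8 b1 b2 c
  have hT : S4 (T 4) := S4_of_dvd (dvd_refl _) (fun n => T_supp (by norm_num))
  have hPs : S4 (Ps 4) := S4_of_dvd (dvd_refl _) (fun n => Ps_supp (by norm_num))
  have ht : S4 (t 4) := S4_of_dvd (dvd_refl _) (fun n => t_supp (by norm_num))
  have ht8 : S4 (t 8) := S4_of_dvd (by norm_num) (fun n => t_supp (k := 8) (by norm_num))
  have e1 : P * (t 4 * t 4 * t 4 * t 8) = T 1 * T 2 ^ 2 := by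
    apply mul_right_cancel₀ (t_ne_zero (k := 4) (by norm_num))
    have h := P_theta
    linear_combination T 1 * T 2 ^ 2 * h - P * t 8 * T 2 ^ 2 * a1 -
      P * t 8 * (T 2 * t 2 + t 4 ^ 2) * a2
  have e2 : T 1 * T 2 ^ 2 = X ^ 0 * (T 4 * (T 4 * T 4)) + X ^ 1 * (Ps 4 * (T 4 * T 4))
      + X ^ 2 * (T 4 * (Ps 4 * Ps 4)) + X ^ 3 * (Ps 4 * (Ps 4 * Ps 4)) := by
    rw [b2, b1]
    ring
  have e3 := congrArg (op 2) (e1.trans e2)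
  rw [op_mul _ _ _ (((ht.mul ht).mul ht).mul ht8), op_add, op_add, op_add,
    op_X_mul _ _ _ (hT.mul (hT.mul hT)), op_X_mul _ _ _ (hPs.mul (hT.mul hT)),
    op_X_mul _ _ _ (hT.mul (hPs.mul hPs)), op_X_mul _ _ _ (hPs.mul (hPs.mul hPs))] at e3
  norm_num at e3
  apply mul_right_cancel₀ (t_ne_zero (k := 8) (by norm_num))
  linear_combination t 4 * e3 + X ^ 2 * Ps 4 * Ps 4 * a4 + X ^ 2 * t 8 ^ 2 * c
   + 2 * X ^ 2 * t 8 * Ps 8 * a8 + 2 * X ^ 2 * t 8 * t 16 ^ 2 * d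

lemma sq_coeff_odd (f : ℤ⟦X⟧) (n : ℕ) (h : ¬ 2 ∣ coeff n (f ^ 2)) :
    ∃ j, n = 2 * j ∧ coeff j f ≠ 0 := by
  by_contra! hne
  apply h
  have h2 : ((2 : ℕ) : ℤ) ∣ coeff n (f ^ 2) ↔ _ := (ZMod.intCast_zmod_eq_zero_iff_dvd _ 2).symm
  refine h2.2 ?_
  rw [pow_two, coeff_mul]
  push_cast
  apply Finset.sum_involution (fun p _ => p.swap)
  · rintro ⟨i, j⟩ _
    simp only [Prod.fst_swap, Prod.snd_swap]
    rw [mul_comm]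
    exact CharTwo.add_self_eq_zero _
  · rintro ⟨i, j⟩ hij hnz heq
    simp only [Prod.swap_prod_mk, Prod.mk.injEq] at heq
    rw [Finset.HasAntidiagonal.mem_antidiagonal] at hij
    simp only at hij
    obtain ⟨rfl, -⟩ := heq
    apply hnz
    simp [hne j (by omega)]
  · rintro ⟨i, j⟩ _
    rfl
  · rintro ⟨i, j⟩ hij
    rw [Finset.HasAntidiagonal.mem_antidiagonal] at hij ⊢
    simp only [Prod.fst_swap, Prod.snd_swap] at hij ⊢
    omega

lemma final (M : ℕ) (hM : Odd M) (h1 : ∀ x y : ℕ, M ≠ x ^ 2 + y ^ 2)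
    (h2 : ∀ x y : ℕ, M ≠ x ^ 2 + 2 * y ^ 2) : 32 ∣ regularOverpartitions 4 8 (2 * M) := by
  obtain ⟨m, rfl⟩ := hM
  have hm := main_series
  set Z := X ^ 2 * (ps 8 * t 16 ^ 2) with hZ
  -- coefficient of Z divisible by 8
  have hc : (8 : ℤ) ∣ coeff (2 * (2 * m + 1)) Z := by
    have e : 2 * (2 * m + 1) = 4 * m + 2 := by ring
    rw [hZ, e, coeff_X_pow_mul, t_eq (by norm_num : 0 < 16)]
    have e : ps 8 * (1 + 2 * u 16) ^ 2 = ps 8 + C 4 * (ps 8 * u 16) + C 4 * (ps 8 * u 16 ^ 2) := by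
      have : (C 4 : ℤ⟦X⟧) = 4 := by simp
      rw [this]; ring
    rw [e, map_add, map_add, coeff_C_mul, coeff_C_mul]
    have z1 : coeff (4 * m) (ps 8) = 0 := by
      by_contra h
      obtain ⟨a, ha⟩ := ps_supp (by norm_num) h
      apply h1 (2 * a + 1) 0
      nlinarith
    have z2 : coeff (4 * m) (ps 8 * u 16) = 0 := by
      rw [coeff_mul]
      apply Finset.sum_eq_zero
      rintro ⟨i, j⟩ hij
      rw [Finset.HasAntidiagonal.mem_antidiagonal] at hij
      by_contra h
      obtain ⟨a, ha⟩ := ps_supp (by norm_num) (left_ne_zero_of_mul h)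
      obtain ⟨b, hb⟩ := u_supp (by norm_num) (right_ne_zero_of_mul h)
      simp only at hij ha hb
      apply h2 (2 * a + 1) (2 * b)
      nlinarith
    have z3 : (2 : ℤ) ∣ coeff (4 * m) (ps 8 * u 16 ^ 2) := by
      rw [coeff_mul]
      apply Finset.dvd_sum
      rintro ⟨i, j⟩ hij
      rw [Finset.HasAntidiagonal.mem_antidiagonal] at hij
      by_contra h
      have hA : coeff i (ps 8) ≠ 0 := by
        intro h0; apply h; simp [h0]
      have hB : ¬ (2 : ℤ) ∣ coeff j (u 16 ^ 2) := by
        intro h0; apply h; exact Dvd.dvd.mul_left h0 _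
      obtain ⟨a, ha⟩ := ps_supp (by norm_num) hA
      obtain ⟨l, hl, hB⟩ := sq_coeff_odd _ _ hB
      obtain ⟨b, hb⟩ := u_supp (by norm_num) hB
      simp only at hij ha hb
      apply h1 (2 * a + 1) (4 * b)
      nlinarith
    omega
  have h4 : ∃ w, t 4 ^ 4 = 1 + 8 * w := by
    refine ⟨u 4 + 3 * u 4 ^ 2 + 4 * u 4 ^ 3 + 2 * u 4 ^ 4, ?_⟩
    rw [t_eq (by norm_num)]
    ring
  obtain ⟨w, hw⟩ := h4
  rw [hw] at hm
  have e1 : op 2 P = 4 * (Z - 2 * w * op 2 P) := by linear_combination hm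
  have e2 : op 2 P = 4 * Z - 32 * (w * (Z - 2 * w * op 2 P)) := by
    linear_combination hm - 8 * w * e1
  have e3 := congrArg (coeff (2 * (2 * m + 1))) e2
  have e4 : (4 * Z - 32 * (w * (Z - 2 * w * op 2 P))) =
      C 4 * Z - C 32 * (w * (Z - 2 * w * op 2 P)) := by simp
  rw [e4, map_sub, coeff_C_mul, coeff_C_mul] at e3
  simp only [op, P, coeff_mk] at e3
  rw [if_pos (by omega)] at e3
  zify
  omega

lemma mod7 : ∀ x y : ZMod 7, (x ^ 2 + y ^ 2 = 0 ∨ x ^ 2 + 2 * y ^ 2 = 0) → x = 0 ∧ y = 0 := by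
  decide

lemma val7 (d : ℕ) (hd : d = 1 ∨ d = 2) (c : ℕ) (hc : ¬ 7 ∣ c) (g : ℕ) :
    ∀ x y : ℕ, 7 ^ (2 * g + 1) * c ≠ x ^ 2 + d * y ^ 2 := by
  induction g with
  | zero =>
    intro x y h
    have h7 : ((x ^ 2 + d * y ^ 2 : ℕ) : ZMod 7) = 0 := by
      rw [← h, ZMod.natCast_eq_zero_iff]
      exact ⟨c, by ring⟩
    obtain ⟨hx, hy⟩ := mod7 x y (by rcases hd with rfl | rfl <;> push_cast at h7 <;> simp_all)
    rw [ZMod.natCast_eq_zero_iff] at hx hy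
    obtain ⟨a, rfl⟩ := hx
    obtain ⟨b, rfl⟩ := hy
    apply hc
    refine ⟨a ^ 2 + d * b ^ 2, ?_⟩
    have : 7 * c = 7 * (7 * (a ^ 2 + d * b ^ 2)) := by
      calc _ = 7 ^ (2 * 0 + 1) * c := by ring
        _ = _ := by rw [h]; ring
    omega
  | succ g ih =>
    intro x y h
    have h7 : ((x ^ 2 + d * y ^ 2 : ℕ) : ZMod 7) = 0 := by
      rw [← h, ZMod.natCast_eq_zero_iff]
      exact ⟨7 ^ (2 * g + 2) * c, by ring⟩
    obtain ⟨hx, hy⟩ := mod7 x y (by rcases hd with rfl | rfl <;> push_cast at h7 <;> simp_all)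
    rw [ZMod.natCast_eq_zero_iff] at hx hy
    obtain ⟨a, rfl⟩ := hx
    obtain ⟨b, rfl⟩ := hy
    apply ih a b
    have : 49 * (7 ^ (2 * g + 1) * c) = 49 * (a ^ 2 + d * b ^ 2) := by
      calc _ = 7 ^ (2 * (g + 1) + 1) * c := by ring
        _ = _ := by rw [h]; ring
    omega

end S8

theorem stmt_8 (n α β γ : ℕ) (k : ℕ) (hk : k ∈ ({1, 2, 3, 4, 5, 6} : Finset ℕ)) :
    32 ∣ regularOverpartitions 4 8
        (16 * 3 ^ (4 * α) * 5 ^ (4 * β) * 7 ^ (4 * γ + 1) * (7 * n + k)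
          + 2 * 3 ^ (4 * α) * 5 ^ (4 * β) * 7 ^ (4 * γ + 2)) := by
  have hk' : 1 ≤ k ∧ k ≤ 6 := by
    simp only [Finset.mem_insert, Finset.mem_singleton] at hk
    omega
  have e : 16 * 3 ^ (4 * α) * 5 ^ (4 * β) * 7 ^ (4 * γ + 1) * (7 * n + k)
          + 2 * 3 ^ (4 * α) * 5 ^ (4 * β) * 7 ^ (4 * γ + 2) =
      2 * (7 ^ (2 * (2 * γ) + 1) * (3 ^ (4 * α) * 5 ^ (4 * β) * (8 * (7 * n + k) + 7))) := by
    ring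
  have p7 : Nat.Prime 7 := by norm_num
  have hc : ¬ 7 ∣ 3 ^ (4 * α) * 5 ^ (4 * β) * (8 * (7 * n + k) + 7) := by
    intro h
    rcases p7.dvd_mul.1 h with h | h
    · rcases p7.dvd_mul.1 h with h | h
      · exact absurd (p7.dvd_of_dvd_pow h) (by norm_num)
      · exact absurd (p7.dvd_of_dvd_pow h) (by norm_num)
    · omega
  rw [e]
  apply S8.final
  · refine Odd.mul (Odd.pow (by decide)) (Odd.mul (Odd.mul (Odd.pow (by decide)) (Odd.pow (by decide))) ?_)
    exact ⟨4 * (7 * n + k) + 3, by ring⟩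
  · intro x y
    have := S8.val7 1 (Or.inl rfl) _ hc (2 * γ) x y
    rwa [one_mul] at this
  · exact S8.val7 2 (Or.inr rfl) _ hc (2 * γ)
end
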